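/- arXiv:1506.06200 — 3 statements merged into one kernel-verified Lean document; each statement's English description precedes it below -/
import Mathlib

section
/- Let X and Y be varieties over a field k of dimension at most n such that [X] = [Y] in K_0(V_k^{(n,n-1)}). Then X and Y have the same number of n-dimensional irreducible components, and there is a bijection between the n-dimensional irreducible components of X and those of Y under which corresponding components are birationally isomorphic. -/
open AlgebraicGeometry CategoryTheory CategoryTheory.Limits

noncomputable section

universe u

/-- A variety over a field `k`: a reduced separated scheme of finite type over `Spec k`. -/
structure Variety (k : Type u) [Field k] : Type (u + 1) where
  /-- the underlying scheme -/
  toScheme : Scheme.{u}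
  /-- the structure morphism to `Spec k` -/
  str : toScheme ⟶ Spec (CommRingCat.of k)
  reduced : IsReduced toScheme
  separated : IsSeparated str
  locallyOfFiniteType : LocallyOfFiniteType str
  quasiCompact : QuasiCompact str

namespace Variety

variable {k : Type u} [Field k]

/-- The dimension of a variety, i.e. the Krull dimension of its underlying space. -/
def dim (V : Variety k) : WithBot ℕ∞ := topologicalKrullDim V.toScheme

/-- `W` together with (implicitly) its two projections is a product of `X` and `Y`
over `k`, i.e. `W ≅ X ×ₖ Y`. -/
def IsProductOf (W X Y : Variety k) : Prop :=
  ∃ e : W.toScheme ≅ Limits.pullback X.str Y.str,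
    e.hom ≫ Limits.pullback.fst X.str Y.str ≫ X.str = W.str

/-- `A` is the affine line `𝔸¹` over `k`. -/
def IsAffLine (A : Variety k) : Prop :=
  ∃ e : A.toScheme ≅ Spec (CommRingCat.of (Polynomial k)),
    e.hom ≫ Spec.map (CommRingCat.ofHom (algebraMap k (Polynomial k))) = A.str

/-- `A` is affine `r`-space `𝔸^r` over `k`. -/
def IsAffSpace (r : ℕ) (A : Variety k) : Prop :=
  ∃ e : A.toScheme ≅ Spec (CommRingCat.of (MvPolynomial (Fin r) k)),
    e.hom ≫ Spec.map (CommRingCat.ofHom (algebraMap k (MvPolynomial (Fin r) k))) = A.str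

/-- A variety is smooth if its structure morphism is smooth. -/
def IsSmoothVar (V : Variety k) : Prop := IsSmooth V.str

/-- Projective `N`-space over `k`, as the `Proj` of a polynomial ring. -/
def ProjSpace (k : Type u) [Field k] (N : ℕ) : Scheme.{u} :=
  letI := MvPolynomial.gradedAlgebra (σ := Fin (N + 1)) (R := k)
  Proj (MvPolynomial.homogeneousSubmodule (Fin (N + 1)) k)

/-- The structure morphism of projective `N`-space over `k`. -/
def ProjSpace.str (k : Type u) [Field k] (N : ℕ) :
    ProjSpace k N ⟶ Spec (CommRingCat.of k) :=
  letI := MvPolynomial.gradedAlgebra (σ := Fin (N + 1)) (R := k)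
  Proj.toSpecZero (MvPolynomial.homogeneousSubmodule (Fin (N + 1)) k) ≫
    Spec.map (CommRingCat.ofHom
      (algebraMap k (MvPolynomial.homogeneousSubmodule (Fin (N + 1)) k 0)))

/-- `P` is projective `N`-space over `k`, as a variety. -/
def IsProjSpaceVar (N : ℕ) (P : Variety k) : Prop :=
  ∃ e : P.toScheme ≅ ProjSpace k N, e.hom ≫ ProjSpace.str k N = P.str

/-- A variety is projective if it admits a closed immersion into some `ℙ^N` over `k`. -/
def IsProjectiveVar (V : Variety k) : Prop :=
  ∃ (N : ℕ) (i : V.toScheme ⟶ ProjSpace k N),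
    IsClosedImmersion i ∧ i ≫ ProjSpace.str k N = V.str

/-- `X` and `Y` are birationally isomorphic over `k`:
some dense open subvarieties are isomorphic over `k`. -/
def BirEquiv (X Y : Variety k) : Prop :=
  ∃ (U : X.toScheme.Opens) (V : Y.toScheme.Opens),
    Dense (U : Set X.toScheme) ∧ Dense (V : Set Y.toScheme) ∧
    ∃ e : U.toScheme ≅ V.toScheme, e.hom ≫ V.ι ≫ Y.str = U.ι ≫ X.str

/-- `X` and `Y` are stably birational: `X × 𝔸^r` and `Y × 𝔸^r` are birationally
isomorphic for some `r ≥ 0`. -/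
def StablyBirational (X Y : Variety k) : Prop :=
  ∃ (r : ℕ) (A XA YA : Variety k),
    IsAffSpace r A ∧ IsProductOf XA X A ∧ IsProductOf YA Y A ∧ BirEquiv XA YA

/-- `X` and `Y` are piecewise isomorphic: they admit finite partitions into locally
closed subvarieties which are isomorphic over `k` piece by piece. -/
def PiecewiseIso (X Y : Variety k) : Prop :=
  ∃ (m : ℕ) (P Q : Fin m → Variety k)
    (f : ∀ i, (P i).toScheme ⟶ X.toScheme) (g : ∀ i, (Q i).toScheme ⟶ Y.toScheme),
    (∀ i, IsImmersion (f i)) ∧ (∀ i, IsImmersion (g i)) ∧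
    (∀ i, f i ≫ X.str = (P i).str) ∧ (∀ i, g i ≫ Y.str = (Q i).str) ∧
    (∀ i j, i ≠ j → Disjoint (Set.range (f i).base) (Set.range (f j).base)) ∧
    (∀ i j, i ≠ j → Disjoint (Set.range (g i).base) (Set.range (g j).base)) ∧
    (⋃ i, Set.range (f i).base) = Set.univ ∧
    (⋃ i, Set.range (g i).base) = Set.univ ∧
    ∀ i, ∃ e : (P i).toScheme ≅ (Q i).toScheme, e.hom ≫ (Q i).str = (P i).str

/-- The set of generators of the scissor-type relations among varieties of the class `P`:
`[X] = [X']` for `X ≅ X'` over `k`, and `[X] = [Y] + [U]` whenever `Y` is a closed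
subvariety of `X` and `U` is its open complement. -/
def cutRel (P : Variety k → Prop) : Set (FreeAbelianGroup {V : Variety k // P V}) :=
  {a | (∃ X Y : {V : Variety k // P V},
          (∃ e : X.1.toScheme ≅ Y.1.toScheme, e.hom ≫ Y.1.str = X.1.str) ∧
          a = FreeAbelianGroup.of X - FreeAbelianGroup.of Y) ∨
       (∃ (X Y U : {V : Variety k // P V}) (i : Y.1.toScheme ⟶ X.1.toScheme)
          (j : U.1.toScheme ⟶ X.1.toScheme),
          IsClosedImmersion i ∧ IsOpenImmersion j ∧
          i ≫ X.1.str = Y.1.str ∧ j ≫ X.1.str = U.1.str ∧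
          Set.range j.base = (Set.range i.base)ᶜ ∧
          a = FreeAbelianGroup.of X - FreeAbelianGroup.of Y - FreeAbelianGroup.of U)}

/-- The Grothendieck group of the class of varieties satisfying `P`: the free abelian
group on (isomorphism classes of) varieties satisfying `P`, modulo the relations
`[X] = [Y] + [X ∖ Y]` for closed subvarieties `Y` of `X`. -/
def K0 (k : Type u) [Field k] (P : Variety k → Prop) : Type (u + 1) :=
  FreeAbelianGroup {V : Variety k // P V} ⧸ AddSubgroup.closure (cutRel P)

instance (P : Variety k → Prop) : AddCommGroup (K0 k P) :=
  QuotientAddGroup.Quotient.addCommGroup _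

/-- The class of a variety in the Grothendieck group. -/
def K0.cls {P : Variety k → Prop} (V : Variety k) (hV : P V) : K0 k P :=
  QuotientAddGroup.mk (FreeAbelianGroup.of ⟨V, hV⟩)

/-- `K_0(V_k^{(n)})`: the Grothendieck group of varieties of dimension at most `n`. -/
abbrev K0le (k : Type u) [Field k] (n : ℕ) : Type (u + 1) :=
  K0 k (fun V => V.dim ≤ (n : WithBot ℕ∞))

/-- `K_0[V_k]` (as an abelian group): the Grothendieck group of all varieties over `k`. -/
abbrev K0Var (k : Type u) [Field k] : Type (u + 1) := K0 k (fun _ => True)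

/-- The class of a variety in `K_0[V_k]`. -/
def K0Var.cls (V : Variety k) : K0Var k := K0.cls V trivial

/-- `K_0(V_k^{(n,n-1)})`: the Grothendieck group of varieties of dimension at most `n`,
where moreover the class of every variety of dimension `< n` is set to `0`. -/
def K0graded (k : Type u) [Field k] (n : ℕ) : Type (u + 1) :=
  FreeAbelianGroup {V : Variety k // V.dim ≤ (n : WithBot ℕ∞)} ⧸
    AddSubgroup.closure (cutRel (fun V => V.dim ≤ (n : WithBot ℕ∞)) ∪
      {a | ∃ X : {V : Variety k // V.dim ≤ (n : WithBot ℕ∞)},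
        X.1.dim < (n : WithBot ℕ∞) ∧ a = FreeAbelianGroup.of X})

instance (n : ℕ) : AddCommGroup (K0graded k n) :=
  QuotientAddGroup.Quotient.addCommGroup _

/-- The class of a variety in `K_0(V_k^{(n,n-1)})`. -/
def K0graded.cls (n : ℕ) (V : Variety k) (hV : V.dim ≤ (n : WithBot ℕ∞)) : K0graded k n :=
  QuotientAddGroup.mk (FreeAbelianGroup.of ⟨V, hV⟩)

/-- `x ∈ K_0(V_k^{(b)})` lies in the image of multiplication by `L = [𝔸¹]`, viewed as the
map `K_0(V_k^{(a)}) → K_0(V_k^{(b)})` sending `[Z]` to `[Z × 𝔸¹]`. -/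
def InMulLImage (a b : ℕ) (x : K0le k b) : Prop :=
  ∃ (m : ℕ) (c : Fin m → ℤ) (Z W : Fin m → Variety k)
    (_ : ∀ i, (Z i).dim ≤ (a : WithBot ℕ∞)) (hW : ∀ i, (W i).dim ≤ (b : WithBot ℕ∞)),
    (∀ i, ∃ A : Variety k, IsAffLine A ∧ IsProductOf (W i) (Z i) A) ∧
    x = ∑ i, c i • K0.cls (W i) (hW i)

/-- `L · χ = 0` in `K_0[V_k]`: there is a representation `χ = ∑ cᵢ [Zᵢ]` with
`∑ cᵢ [Zᵢ × 𝔸¹] = 0`. -/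
def MulLZero (χ : K0Var k) : Prop :=
  ∃ (m : ℕ) (c : Fin m → ℤ) (Z W : Fin m → Variety k),
    (∀ i, ∃ A : Variety k, IsAffLine A ∧ IsProductOf (W i) (Z i) A) ∧
    χ = ∑ i, c i • K0Var.cls (Z i) ∧
    (0 : K0Var k) = ∑ i, c i • K0Var.cls (W i)

/-- The subgroup of `K_0[V_k]` of multiples of `L`, i.e. the ideal generated by `L`
viewed as an additive subgroup. -/
def LMultiples (k : Type u) [Field k] : AddSubgroup (K0Var k) :=
  AddSubgroup.closure
    {y | ∃ (m : ℕ) (c : Fin m → ℤ) (Z W : Fin m → Variety k),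
      (∀ i, ∃ A : Variety k, IsAffLine A ∧ IsProductOf (W i) (Z i) A) ∧
      y = ∑ i, c i • K0Var.cls (W i)}

/-- `Z` realizes the closed complement `X ∖ U` of the open `U ⊆ X` as a variety. -/
def IsComplementOf (Z X : Variety k) (U : X.toScheme.Opens) : Prop :=
  ∃ i : Z.toScheme ⟶ X.toScheme, IsClosedImmersion i ∧ i ≫ X.str = Z.str ∧
    Set.range i.base = (U : Set X.toScheme)ᶜ

/-- The birational isomorphism between `n`-dimensional varieties `X ⇢ Y` represented by
an isomorphism `U → V` of open subvarieties is convenient: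
`[X ∖ U] - [Y ∖ V]` lies in the image of `·L : K_0(V_k^{(n-2)}) → K_0(V_k^{(n-1)})`. -/
def ConvenientRep (n : ℕ) (X Y : Variety k) (U : X.toScheme.Opens)
    (V : Y.toScheme.Opens) : Prop :=
  ∀ (ZX ZY : Variety k) (hZX : ZX.dim ≤ ((n - 1 : ℕ) : WithBot ℕ∞))
    (hZY : ZY.dim ≤ ((n - 1 : ℕ) : WithBot ℕ∞)),
    IsComplementOf ZX X U → IsComplementOf ZY Y V →
    InMulLImage (n - 2) (n - 1) (K0.cls ZX hZX - K0.cls ZY hZY)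

/-- A field `k` is convenient if every birational isomorphism between smooth projective
varieties over `k` is convenient. -/
def ConvenientField (k : Type u) [Field k] : Prop :=
  ∀ (n : ℕ) (X Y : Variety k), IsSmoothVar X → IsSmoothVar Y →
    IsProjectiveVar X → IsProjectiveVar Y →
    IrreducibleSpace X.toScheme → IrreducibleSpace Y.toScheme →
    X.dim = (n : WithBot ℕ∞) → Y.dim = (n : WithBot ℕ∞) →
    ∀ (U : X.toScheme.Opens) (V : Y.toScheme.Opens),
      Dense (U : Set X.toScheme) → Dense (V : Set Y.toScheme) →
      ∀ e : U.toScheme ≅ V.toScheme, e.hom ≫ V.ι ≫ Y.str = U.ι ≫ X.str →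
      ConvenientRep n X Y U V

end Variety
namespace Variety

variable {k : Type u} [Field k]

/-- The type of birational isomorphism classes of irreducible `n`-dimensional
varieties over `k` (the set `B_n`). -/
def BirClass (k : Type u) [Field k] (n : ℕ) : Type (u + 1) :=
  Quot (fun X Y : {V : Variety k // IrreducibleSpace V.toScheme ∧
    V.dim = (n : WithBot ℕ∞)} => BirEquiv X.1 Y.1)

/-- The type of stable birational isomorphism classes of irreducible varieties
over `k` (the set `SB`). -/
def StableBirClass (k : Type u) [Field k] : Type (u + 1) :=
  Quot (fun X Y : {V : Variety k // IrreducibleSpace V.toScheme} =>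
    StablyBirational X.1 Y.1)

/-- The family of varieties `C` together with the closed immersions `f i` realizes
exactly the `n`-dimensional irreducible components of `X`, each exactly once. -/
def RealizesComponents (n : ℕ) (X : Variety k) (m : ℕ)
    (C : Fin m → Variety k) (f : ∀ i, (C i).toScheme ⟶ X.toScheme) : Prop :=
  (∀ i, IsClosedImmersion (f i)) ∧ (∀ i, f i ≫ X.str = (C i).str) ∧
  Function.Injective (fun i => Set.range (f i).base) ∧
  (Set.range fun i => Set.range (f i).base) =
    {S | S ∈ irreducibleComponents X.toScheme ∧
      topologicalKrullDim S = (n : WithBot ℕ∞)}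

/-- `p : E ⟶ Z` is a Zariski-locally trivial `ℙ^ℓ`-bundle: every point of `Z` has an
open neighbourhood `W` such that `p⁻¹(W)` is isomorphic over `W` to `W × ℙ^ℓ`. -/
def IsProjBundle (ℓ : ℕ) {E Z : Variety k} (p : E.toScheme ⟶ Z.toScheme) : Prop :=
  ∀ z : Z.toScheme, ∃ W : Z.toScheme.Opens, z ∈ W ∧
    ∃ e : (p ⁻¹ᵁ W).toScheme ≅ Limits.pullback (W.ι ≫ Z.str) (ProjSpace.str k ℓ),
      e.hom ≫ Limits.pullback.fst (W.ι ≫ Z.str) (ProjSpace.str k ℓ) = p ∣_ W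

/-- `X` (of dimension `d`) has stable dimensional complexity `m`: `m` is the minimal
integer such that `X` is stably birational to `X' × 𝔸^(d-m)` for some variety `X'` of
dimension `m`. -/
def HasStableDimComplexity (X : Variety k) (d m : ℕ) : Prop :=
  (∃ X' A P : Variety k, X'.dim = (m : WithBot ℕ∞) ∧ IsAffSpace (d - m) A ∧
      IsProductOf P X' A ∧ StablyBirational X P) ∧
  ∀ j < m, ¬ ∃ X' A P : Variety k, X'.dim = (j : WithBot ℕ∞) ∧ IsAffSpace (d - j) A ∧
      IsProductOf P X' A ∧ StablyBirational X P

/-- Generators of the covering relations among smooth varieties: `[X] = ∑ᵢ [Xᵢ]`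
whenever `{Xᵢ → X}` is a finite family of locally closed embeddings of smooth
varieties with pairwise disjoint images whose union is all of `X`. -/
def smCutRel (k : Type u) [Field k] :
    Set (FreeAbelianGroup {V : Variety k // IsSmoothVar V}) :=
  {a | ∃ (X : {V : Variety k // IsSmoothVar V}) (m : ℕ)
        (P : Fin m → {V : Variety k // IsSmoothVar V})
        (f : ∀ i, (P i).1.toScheme ⟶ X.1.toScheme),
        (∀ i, IsImmersion (f i)) ∧ (∀ i, f i ≫ X.1.str = (P i).1.str) ∧
        (∀ i j, i ≠ j → Disjoint (Set.range (f i).base) (Set.range (f j).base)) ∧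
        (⋃ i, Set.range (f i).base) = Set.univ ∧
        a = FreeAbelianGroup.of X - ∑ i, FreeAbelianGroup.of (P i)}

/-- `K_0(V_k^{sm})`: the Grothendieck group of smooth varieties over `k`, with the
covering relations. -/
def K0sm (k : Type u) [Field k] : Type (u + 1) :=
  FreeAbelianGroup {V : Variety k // IsSmoothVar V} ⧸ AddSubgroup.closure (smCutRel k)

instance : AddCommGroup (K0sm k) := QuotientAddGroup.Quotient.addCommGroup _

/-- The class of a smooth variety in `K_0(V_k^{sm})`. -/
def K0sm.cls (V : Variety k) (hV : IsSmoothVar V) : K0sm k :=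
  QuotientAddGroup.mk (FreeAbelianGroup.of ⟨V, hV⟩)

end Variety
namespace Variety

variable {k : Type u} [Field k]

/-- The class of a variety in `K_0(V_k^{(n)})`. -/
def K0le.cls (n : ℕ) (V : Variety k) (hV : V.dim ≤ (n : WithBot ℕ∞)) : K0le k n :=
  K0.cls V hV

end Variety

open Variety

lemma dimaux_integral_le {R S : Type u} [CommRing R] [CommRing S] [Algebra R S]
    [Algebra.IsIntegral R S] : ringKrullDim S ≤ ringKrullDim R := by
  refine Order.krullDim_le_of_strictMono (PrimeSpectrum.comap (algebraMap R S)) ?_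
  intro p q hpq
  have h : p.asIdeal < q.asIdeal := hpq
  exact Ideal.IsIntegral.comap_lt_comap h

lemma dimaux_integral_ge {R S : Type u} [CommRing R] [CommRing S] [Algebra R S]
    [Algebra.IsIntegral R S] (hinj : Function.Injective (algebraMap R S)) :
    ringKrullDim R ≤ ringKrullDim S := by
  have : FaithfulSMul R S := (faithfulSMul_iff_algebraMap_injective R S).mpr hinj
  refine iSup_le fun l => ?_
  obtain ⟨P, hP, hPl⟩ := (Ideal.nonempty_primesOver (S := S) (RelSeries.head l).asIdeal).some
  obtain ⟨L, hL, -, -⟩ := Ideal.exists_ltSeries_of_hasGoingUp (S := S) l P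
  rw [← hL]
  exact Order.LTSeries.length_le_krullDim L

lemma dimaux_trdeg (k : Type u) [Field k] (A : Type u) [CommRing A] [IsDomain A] [Algebra k A]
    [Algebra.FiniteType k A] :
    ∃ d : ℕ, ringKrullDim A = d ∧ Algebra.trdeg k A = d := by
  obtain ⟨s, g, hinj, hgint⟩ := exists_integral_inj_algHom_of_fg k A
  refine ⟨s, ?_, ?_⟩
  · let := g.toRingHom.toAlgebra
    have : Algebra.IsIntegral (MvPolynomial (Fin s) k) A := ⟨hgint⟩
    refine (le_antisymm (dimaux_integral_le (R := MvPolynomial (Fin s) k))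
      (dimaux_integral_ge (R := MvPolynomial (Fin s) k) hinj)).trans ?_
    simp [MvPolynomial.ringKrullDim_of_isNoetherianRing]
  · let := g.toRingHom.toAlgebra
    have : Algebra.IsIntegral (MvPolynomial (Fin s) k) A := ⟨hgint⟩
    have : IsScalarTower k (MvPolynomial (Fin s) k) A := .of_algebraMap_eq' g.comp_algebraMap.symm
    have : FaithfulSMul (MvPolynomial (Fin s) k) A :=
      (faithfulSMul_iff_algebraMap_injective _ _).mpr hinj
    have := _root_.trdeg_add_eq k (MvPolynomial (Fin s) k) (A := A)
    rw [← this, _root_.trdeg_eq_zero (R := MvPolynomial (Fin s) k) (A := A)]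
    simp

lemma dimaux_away (k : Type u) [Field k] (A : Type u) [CommRing A] [IsDomain A] [Algebra k A]
    [Algebra.FiniteType k A] (f : A) (hf : f ≠ 0) :
    ringKrullDim A ≤ ringKrullDim (Localization.Away f) := by
  have hle : Submonoid.powers f ≤ nonZeroDivisors A := powers_le_nonZeroDivisors_of_noZeroDivisors hf
  have : IsDomain (Localization.Away f) := IsLocalization.isDomain_localization hle
  have : Algebra.FiniteType A (Localization.Away f) := IsLocalization.finiteType_of_monoid_fg (.powers f) _
  have : Algebra.FiniteType k (Localization.Away f) := Algebra.FiniteType.trans (S := A) ‹_› ‹_›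
  obtain ⟨d, h1, h2⟩ := dimaux_trdeg k A
  obtain ⟨e, h3, h4⟩ := dimaux_trdeg k (Localization.Away f)
  have hi : Function.Injective (algebraMap A (Localization.Away f)) := IsLocalization.injective _ hle
  have : FaithfulSMul A (Localization.Away f) :=
      (faithfulSMul_iff_algebraMap_injective _ _).mpr hi
  have := _root_.trdeg_le_of_injective (IsScalarTower.toAlgHom k A (Localization.Away f)) hi
  rw [h2, h4] at this
  rw [h1, h3]
  exact_mod_cast this

open TopologicalSpace in
lemma dimaux_cover {T : Type u} [TopologicalSpace T] (c : WithBot ℕ∞)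
    (h : ∀ t : T, ∃ O : Set T, IsOpen O ∧ t ∈ O ∧ topologicalKrullDim O ≤ c) :
    topologicalKrullDim T ≤ c := by
  refine iSup_le fun p => ?_
  obtain ⟨t, ht⟩ := p.head.isIrreducible.nonempty
  obtain ⟨O, hO, htO, hc⟩ := h t
  refine le_trans ?_ hc
  let e := IrreducibleCloseds.orderIsoOfIsOpenEmbedding (Subtype.val : O → T) hO.isOpenEmbedding_subtypeVal
  let q : LTSeries (IrreducibleCloseds O) :=
    { length := p.length
      toFun := fun i => e.symm ⟨p i, ⟨⟨t, htO⟩, (LTSeries.head_le p i : p.head ≤ p i) ht⟩⟩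
      step := fun i => e.symm.lt_iff_lt.mpr (p.step i) }
  exact Order.LTSeries.length_le_krullDim q

lemma dimaux_le_of_range {Z X : Type u} [TopologicalSpace Z] [TopologicalSpace X] {g : Z → X}
    (hg : Topology.IsInducing g) {s : Set X} (hs : ∀ z, g z ∈ s) :
    topologicalKrullDim Z ≤ topologicalKrullDim s :=
  (hg.codRestrict hs).topologicalKrullDim_le

lemma dimaux_mono {X : Type u} [TopologicalSpace X] {s t : Set X} (hst : s ⊆ t) :
    topologicalKrullDim s ≤ topologicalKrullDim t :=
  dimaux_le_of_range Topology.IsInducing.subtypeVal (fun z => hst z.2)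

lemma dimaux_image {Z X : Type u} [TopologicalSpace Z] [TopologicalSpace X] {g : Z → X}
    (hg : Topology.IsEmbedding g) (t : Set Z) :
    topologicalKrullDim (g '' t : Set X) = topologicalKrullDim t :=
  ((hg.homeomorphImage t).isHomeomorph.topologicalKrullDim_eq).symm

lemma dimaux_closed {Z X : Type u} [TopologicalSpace Z] [TopologicalSpace X] {g : Z → X}
    (hg : Topology.IsClosedEmbedding g) (z : Z) :
    topologicalKrullDim (closure {g z} : Set X) = topologicalKrullDim (closure {z} : Set Z) := by
  rw [← dimaux_image hg.isEmbedding, ← hg.closure_image_eq, Set.image_singleton]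

lemma dimaux_spec (A : Type u) [CommRing A] (p : PrimeSpectrum A) :
    topologicalKrullDim (closure {p} : Set (PrimeSpectrum A)) ≤ ringKrullDim (A ⧸ p.asIdeal) := by
  rw [← PrimeSpectrum.topologicalKrullDim_eq_ringKrullDim]
  have h := PrimeSpectrum.isClosedEmbedding_comap_of_surjective (A ⧸ p.asIdeal)
    (Ideal.Quotient.mk p.asIdeal) Ideal.Quotient.mk_surjective
  have hr : (closure {p} : Set (PrimeSpectrum A)) = PrimeSpectrum.comap (Ideal.Quotient.mk p.asIdeal) '' Set.univ := by
    rw [Set.image_univ, _root_.range_comap_of_surjective _ _ Ideal.Quotient.mk_surjective,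
      PrimeSpectrum.closure_singleton, Ideal.mk_ker]
  rw [hr, dimaux_image h.isEmbedding]
  exact topologicalKrullDim_subspace_le _ _

/-- Key: `dim` of the closure of a point can be computed in an open. -/
lemma dimaux_open {k : Type u} [Field k] {U X : Scheme.{u}} (s : X ⟶ Spec (CommRingCat.of k))
    [LocallyOfFiniteType s] (j : U ⟶ X) [IsOpenImmersion j] (u : U) :
    topologicalKrullDim (closure {j u} : Set X) = topologicalKrullDim (closure {u} : Set U) := by
  have hj := j.isOpenEmbedding
  have hcl : j ⁻¹' (closure {j u}) = closure {u} := by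
    rw [← Set.image_singleton, hj.isInducing.closure_eq_preimage_closure_image]
  have himg : j '' (closure {u}) = closure {j u} ∩ Set.range j := by
    rw [← hcl, Set.image_preimage_eq_inter_range]
  rw [← dimaux_image hj.isEmbedding]
  refine le_antisymm ?_ (dimaux_mono (by rw [himg]; exact Set.inter_subset_left))
  refine dimaux_cover _ fun t => ?_
  obtain ⟨R, v, hvo', ⟨y, hy⟩, -⟩ := Scheme.exists_affine_mem_range_and_range_subset
    (U := (⊤ : X.Opens)) (x := t.1) trivial
  have hvo := v.isOpenEmbedding
  refine ⟨Subtype.val ⁻¹' Set.range v, hvo.isOpen_range.preimage continuous_subtype_val, ⟨y, hy⟩, ?_⟩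
  have hju : j u ∈ Set.range v := by
    have := mem_closure_iff.mp t.2 _ hvo.isOpen_range ⟨y, hy⟩
    obtain ⟨_, h1, rfl⟩ := this
    exact h1
  obtain ⟨p, hp⟩ := hju
  have hclv : v ⁻¹' (closure {v p}) = closure {p} := by
    rw [← Set.image_singleton, hvo.isInducing.closure_eq_preimage_closure_image]
  rw [hp] at hclv
  have h1 : topologicalKrullDim (Subtype.val ⁻¹' Set.range v : Set (closure {j u} : Set X)) ≤
      topologicalKrullDim (v '' closure {p} : Set X) := by
    refine dimaux_le_of_range
      (Topology.IsInducing.subtypeVal.comp Topology.IsInducing.subtypeVal) ?_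
    rintro ⟨⟨w, h1⟩, q, hq⟩
    have hq' : v q = w := hq
    exact ⟨q, by rw [← hclv]; change v q ∈ closure {j u}; rw [hq']; exact h1, hq'⟩
  rw [dimaux_image hvo.isEmbedding] at h1
  have h2 := h1.trans (dimaux_spec R p)
  obtain ⟨φ, hφ⟩ := Spec.map_surjective (v ≫ s)
  have hft : LocallyOfFiniteType (Spec.map φ) := by rw [hφ]; infer_instance
  have hft' : φ.hom.FiniteType := HasRingHomProperty.Spec_iff.mp hft
  algebraize [φ.hom]
  have hft2 : Algebra.FiniteType k R := ‹_›
  obtain ⟨_, ⟨f, rfl⟩, hpf, hfj⟩ := PrimeSpectrum.isTopologicalBasis_basic_opens.exists_subset_of_mem_open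
    (u := v ⁻¹' Set.range j) (a := p) ⟨u, hp.symm⟩ (hj.isOpen_range.preimage v.continuous)
  have hf0 : Ideal.Quotient.mk p.asIdeal f ≠ 0 := by
    rw [Ne, Ideal.Quotient.eq_zero_iff_mem]; exact hpf
  have hpp : p.asIdeal.IsPrime := p.2
  have hdom : IsDomain (R ⧸ p.asIdeal) := Ideal.Quotient.isDomain _
  have : Algebra.FiniteType k (R ⧸ p.asIdeal) := inferInstance
  refine (h2.trans (dimaux_away k (R ⧸ p.asIdeal) _ hf0)).trans ?_
  rw [← PrimeSpectrum.topologicalKrullDim_eq_ringKrullDim]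
  have hc1 := PrimeSpectrum.localization_away_isOpenEmbedding
    (Localization.Away (Ideal.Quotient.mk p.asIdeal f)) (Ideal.Quotient.mk p.asIdeal f)
  have hc2 := PrimeSpectrum.isClosedEmbedding_comap_of_surjective (R ⧸ p.asIdeal)
    (Ideal.Quotient.mk p.asIdeal) Ideal.Quotient.mk_surjective
  refine dimaux_le_of_range (hvo.isInducing.comp (hc2.isInducing.comp hc1.isInducing)) ?_
  intro z
  rw [himg]
  refine ⟨?_, ?_⟩
  · change _ ∈ v ⁻¹' (closure {j u})
    rw [hclv]
    refine (PrimeSpectrum.le_iff_mem_closure _ _).mp ?_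
    intro a ha
    change algebraMap _ _ (Ideal.Quotient.mk p.asIdeal a) ∈ z.asIdeal
    rw [Ideal.Quotient.eq_zero_iff_mem.mpr ha, map_zero]
    exact zero_mem _
  · refine hfj ?_
    intro hz
    have hz' : algebraMap _ _ (Ideal.Quotient.mk p.asIdeal f) ∈ z.asIdeal := hz
    exact z.2.ne_top (Ideal.eq_top_of_isUnit_mem _ hz'
      (IsLocalization.Away.algebraMap_isUnit (Ideal.Quotient.mk p.asIdeal f)))

namespace Variety

variable {k : Type u} [Field k]

lemma dimaux_component {X : Type u} [TopologicalSpace X] {n : ℕ}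
    (hX : topologicalKrullDim X ≤ (n : WithBot ℕ∞)) {x : X}
    (hx : topologicalKrullDim (closure {x} : Set X) = (n : WithBot ℕ∞)) :
    closure {x} ∈ irreducibleComponents X := by
  have hirr : IsIrreducible (closure {x} : Set X) := isIrreducible_singleton.closure
  refine ⟨hirr, fun t ht hst => ?_⟩
  by_contra hne
  let S : TopologicalSpace.IrreducibleCloseds X := ⟨closure {x}, hirr, isClosed_closure⟩
  let T : TopologicalSpace.IrreducibleCloseds X := ⟨closure t, ht.closure, isClosed_closure⟩
  have hST : S < T := by
    refine lt_of_le_not_ge (fun y hy => subset_closure (hst hy)) fun h => hne ?_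
    exact fun y hy => h (subset_closure hy)
  have h1 : (n : WithBot ℕ∞) ≤ (Order.height S : WithBot ℕ∞) := by
    rw [← hx, Order.height_eq_krullDim_Iic]
    let F : TopologicalSpace.IrreducibleCloseds (closure {x} : Set X) → Set.Iic S := fun Z =>
      ⟨Z.map Subtype.val continuous_subtype_val, by
        intro y hy
        have : closure (Subtype.val '' (Z : Set (closure {x} : Set X))) ⊆ closure {x} :=
          closure_minimal (by rintro _ ⟨z, -, rfl⟩; exact z.2) isClosed_closure
        exact this hy⟩
    refine Order.krullDim_le_of_strictMono F ?_
    intro Z W hZW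
    exact TopologicalSpace.IrreducibleCloseds.map_strictMono_of_isInducing
      Topology.IsInducing.subtypeVal hZW
  have h2 : (Order.height T : WithBot ℕ∞) ≤ n := (Order.height_le_krullDim T).trans hX
  have h1' : (n : ℕ∞) ≤ Order.height S := by exact_mod_cast h1
  have h2' : Order.height T ≤ (n : ℕ∞) := by exact_mod_cast h2
  have h3 : Order.height S ≤ Order.height T := Order.height_mono hST.le
  have h4 := Order.height_strictMono hST ((h3.trans h2').trans_lt (ENat.natCast_lt_top n))
  exact absurd (h4.trans_le h2') (not_lt.mpr h1')

instance auxRed (X : Variety k) : IsReduced X.toScheme := X.reduced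
instance auxLft (X : Variety k) : LocallyOfFiniteType X.str := X.locallyOfFiniteType
instance auxQc (X : Variety k) : QuasiCompact X.str := X.quasiCompact

lemma auxNoeth (X : Variety k) : TopologicalSpace.NoetherianSpace X.toScheme := by
  have h1 : IsLocallyNoetherian X.toScheme := LocallyOfFiniteType.isLocallyNoetherian X.str
  have h2 : CompactSpace X.toScheme := (quasiCompact_iff_compactSpace X.str).mp inferInstance
  have h3 : IsNoetherian X.toScheme := {}
  infer_instance

/-- Local isomorphism of pointed varieties. -/
def ptRel (P Q : Σ V : Variety k, V.toScheme) : Prop :=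
  ∃ (W : Scheme.{u}) (a : W ⟶ P.1.toScheme) (b : W ⟶ Q.1.toScheme),
    IsOpenImmersion a ∧ IsOpenImmersion b ∧ a ≫ P.1.str = b ≫ Q.1.str ∧
    ∃ w : W, a w = P.2 ∧ b w = Q.2

/-- The setoid of local isomorphism. -/
def ptSetoid (k : Type u) [Field k] : Setoid (Σ V : Variety k, V.toScheme) where
  r := ptRel
  iseqv :=
    { refl := fun P => ⟨P.1.toScheme, 𝟙 _, 𝟙 _, inferInstance, inferInstance, rfl, P.2, by simp, by simp⟩
      symm := fun ⟨W, a, b, ha, hb, h, w, h1, h2⟩ => ⟨W, b, a, hb, ha, h.symm, w, h2, h1⟩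
      trans := by
        rintro P Q R ⟨W, a, b, ha, hb, h, w, h1, h2⟩ ⟨W', a', b', ha', hb', h', w', h1', h2'⟩
        obtain ⟨z, hz1, hz2⟩ := Scheme.Pullback.exists_preimage_pullback (f := b) (g := a') w w' (h2.trans h1'.symm)
        refine ⟨pullback b a', pullback.fst b a' ≫ a, pullback.snd b a' ≫ b', inferInstance,
          inferInstance, ?_, z, ?_, ?_⟩
        · rw [Category.assoc, h, pullback.condition_assoc, h', Category.assoc]
        · simp [hz1, h1]
        · simp [hz2, h2'] }

/-- The local isomorphism class of a point. -/
def ptCls (V : Variety k) (x : V.toScheme) : Quotient (ptSetoid k) :=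
  Quotient.mk (ptSetoid k) ⟨V, x⟩

lemma ptCls_open {U X : Variety k} (j : U.toScheme ⟶ X.toScheme) [IsOpenImmersion j]
    (hj : j ≫ X.str = U.str) (x : U.toScheme) : ptCls X (j x) = ptCls U x :=
  Quotient.sound (s := ptSetoid k) ⟨U.toScheme, j, 𝟙 _, inferInstance, inferInstance, by simpa using hj, x, rfl, by simp⟩

lemma ptCls_closed {Y X : Variety k} (i : Y.toScheme ⟶ X.toScheme) [IsClosedImmersion i]
    (hi : i ≫ X.str = Y.str) (y : Y.toScheme) (hc : closure {i y} ∈ irreducibleComponents X.toScheme) :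
    ptCls X (i y) = ptCls Y y := by
  have := auxNoeth X
  have hfin : (irreducibleComponents X.toScheme \ {closure {i y}}).Finite :=
    TopologicalSpace.NoetherianSpace.finite_irreducibleComponents.subset Set.sdiff_subset
  let W : X.toScheme.Opens := ⟨(⋃ S ∈ irreducibleComponents X.toScheme \ {closure {i y}}, S)ᶜ,
    (hfin.isClosed_biUnion fun S hS => isClosed_of_mem_irreducibleComponents S hS.1).isOpen_compl⟩
  have hyW : i y ∈ W := by
    intro h
    simp only [Set.mem_iUnion] at h
    obtain ⟨S, ⟨hS, hne⟩, hyS⟩ := h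
    have hsub : closure {i y} ⊆ S := closure_minimal (by simpa using hyS)
      (isClosed_of_mem_irreducibleComponents S hS)
    exact hne (hsub.antisymm (hc.2 hS.1 hsub)).symm
  have hWr : ∀ x ∈ W, ∃ y', i y' = x := by
    intro x hx
    have hx1 : x ∈ closure {i y} := by
      by_contra hne
      refine hx ?_
      simp only [Set.mem_iUnion]
      refine ⟨irreducibleComponent x, ⟨irreducibleComponent_mem_irreducibleComponents x, ?_⟩,
        mem_irreducibleComponent⟩
      intro h
      rw [Set.mem_singleton_iff] at h
      exact hne (h ▸ mem_irreducibleComponent)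
    exact closure_minimal (by simp) i.isClosedEmbedding.isClosed_range hx1
  have : Surjective (i ∣_ W) := by
    refine ⟨fun x => ?_⟩
    obtain ⟨y', hy'⟩ := hWr x.1 x.2
    refine ⟨⟨y', by change i y' ∈ W; rw [hy']; exact x.2⟩, ?_⟩
    refine Subtype.ext ?_
    exact (morphismRestrict_base_coe i W _).trans hy'
  have : IsIso (i ∣_ W) := isIso_of_isClosedImmersion_of_surjective _
  refine Quotient.sound (s := ptSetoid k) ⟨(i ⁻¹ᵁ W).toScheme, (i ∣_ W) ≫ W.ι, (i ⁻¹ᵁ W).ι, inferInstance,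
    inferInstance, ?_, ⟨y, hyW⟩, ?_, ?_⟩
  · simp [hi]
  · rw [morphismRestrict_ι]
    rfl
  · rfl

/-- Points of dimension `n` with given class. -/
def ptSet (n : ℕ) (X : Variety k) (c : Quotient (ptSetoid k)) : Set X.toScheme :=
  {x | topologicalKrullDim (closure {x} : Set X.toScheme) = (n : WithBot ℕ∞) ∧ ptCls X x = c}

lemma ptSet_finite {n : ℕ} {X : Variety k} (hX : X.dim ≤ (n : WithBot ℕ∞))
    (c : Quotient (ptSetoid k)) : (ptSet n X c).Finite := by
  have := auxNoeth X
  refine Set.Finite.of_finite_image (f := fun x => closure {x})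
    (TopologicalSpace.NoetherianSpace.finite_irreducibleComponents.subset ?_) ?_
  · rintro _ ⟨x, hx, rfl⟩
    exact dimaux_component hX hx.1
  · intro x _ y _ h
    exact (inseparable_iff_closure_eq.mpr h).eq

lemma ptSet_cut {n : ℕ} {X Y U : Variety k} (hX : X.dim ≤ (n : WithBot ℕ∞))
    (i : Y.toScheme ⟶ X.toScheme) (j : U.toScheme ⟶ X.toScheme) [IsClosedImmersion i]
    [IsOpenImmersion j] (hi : i ≫ X.str = Y.str) (hj : j ≫ X.str = U.str)
    (hr : Set.range j = (Set.range i)ᶜ) (c : Quotient (ptSetoid k)) :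
    (ptSet n X c).ncard = (ptSet n Y c).ncard + (ptSet n U c).ncard := by
  have hfin := ptSet_finite hX c
  have heq : ptSet n X c = i '' (ptSet n Y c) ∪ j '' (ptSet n U c) := by
    ext x
    constructor
    · rintro ⟨h1, h2⟩
      by_cases hx : x ∈ Set.range i
      · obtain ⟨y, rfl⟩ := hx
        refine Or.inl ⟨y, ⟨?_, ?_⟩, rfl⟩
        · rw [← h1, dimaux_closed i.isClosedEmbedding]
        · rw [← h2, ptCls_closed i hi y (dimaux_component hX h1)]
      · obtain ⟨y, rfl⟩ : x ∈ Set.range j := by rw [hr]; exact hx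
        refine Or.inr ⟨y, ⟨?_, ?_⟩, rfl⟩
        · rw [← h1, dimaux_open X.str j]
        · rw [← h2, ptCls_open j hj]
    · rintro (⟨y, ⟨h1, h2⟩, rfl⟩ | ⟨y, ⟨h1, h2⟩, rfl⟩)
      · have h1' := (dimaux_closed i.isClosedEmbedding y).trans h1
        exact ⟨h1', by rw [ptCls_closed i hi y (dimaux_component hX h1'), h2]⟩
      · exact ⟨by rw [dimaux_open X.str j, h1], by rw [ptCls_open j hj, h2]⟩
  rw [heq] at hfin ⊢
  rw [Set.ncard_union_eq ?_ (hfin.subset Set.subset_union_left) (hfin.subset Set.subset_union_right),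
    Set.ncard_image_of_injective _ i.isClosedEmbedding.injective,
    Set.ncard_image_of_injective _ j.isOpenEmbedding.injective]
  rw [Set.disjoint_left]
  rintro _ ⟨y, -, rfl⟩ ⟨u, -, hu⟩
  have : j u ∈ (Set.range i)ᶜ := by rw [← hr]; exact ⟨u, rfl⟩
  exact this ⟨y, hu.symm⟩

lemma ptSet_iso {n : ℕ} {X Y : Variety k}
    (e : X.toScheme ≅ Y.toScheme) (he : e.hom ≫ Y.str = X.str) (c : Quotient (ptSetoid k)) :
    (ptSet n X c).ncard = (ptSet n Y c).ncard := by
  have heq : ptSet n Y c = e.hom '' (ptSet n X c) := by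
    ext y
    obtain ⟨x, rfl⟩ := e.hom.surjective y
    rw [e.hom.isOpenEmbedding.injective.mem_set_image]
    simp only [ptSet, Set.mem_ofPred_eq]
    rw [dimaux_open Y.str e.hom, ptCls_open e.hom he]
  rw [heq, Set.ncard_image_of_injective _ e.hom.isOpenEmbedding.injective]

lemma ptSet_small {n : ℕ} {X : Variety k} (hX : X.dim < (n : WithBot ℕ∞))
    (c : Quotient (ptSetoid k)) : (ptSet n X c).ncard = 0 := by
  have : ptSet n X c = ∅ := by
    refine Set.eq_empty_of_forall_notMem ?_
    rintro x ⟨h, -⟩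
    exact absurd ((topologicalKrullDim_subspace_le _ (closure {x} : Set X.toScheme)).trans_lt hX)
      (by rw [h]; exact lt_irrefl _)
  simp [this]

lemma ptSet_eq_of_cls_eq {n : ℕ} {X Y : Variety k}
    (hX : X.dim ≤ (n : WithBot ℕ∞)) (hY : Y.dim ≤ (n : WithBot ℕ∞))
    (h : K0graded.cls n X hX = K0graded.cls n Y hY) (c : Quotient (ptSetoid k)) :
    (ptSet n X c).ncard = (ptSet n Y c).ncard := by
  let Φ : FreeAbelianGroup {V : Variety k // V.dim ≤ (n : WithBot ℕ∞)} →+ ℤ :=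
    FreeAbelianGroup.lift (fun V => ((ptSet n V.1 c).ncard : ℤ))
  have hmem := (QuotientAddGroup.eq).mp h
  have hle : AddSubgroup.closure (cutRel (fun V : Variety k => V.dim ≤ (n : WithBot ℕ∞)) ∪
      {a | ∃ X : {V : Variety k // V.dim ≤ (n : WithBot ℕ∞)},
        X.1.dim < (n : WithBot ℕ∞) ∧ a = FreeAbelianGroup.of X}) ≤ Φ.ker := by
    rw [AddSubgroup.closure_le]
    rintro a ((⟨X, Y, ⟨e, he⟩, rfl⟩ | ⟨X, Y, U, i, j, hi, hj, hi', hj', hr, rfl⟩) | ⟨X, hX, rfl⟩)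
    · simp [Φ, ptSet_iso e he c]
    · have := ptSet_cut X.2 i j hi' hj' hr c
      simp [Φ, this]
    · simp [Φ, ptSet_small hX c]
  have := hle hmem
  simp only [Φ, AddMonoidHom.mem_ker, map_add, map_neg, FreeAbelianGroup.lift_apply_of] at this
  omega

lemma birEquiv_of_ptCls {C D : Variety k} [IrreducibleSpace C.toScheme]
    [IrreducibleSpace D.toScheme] {x : C.toScheme} {y : D.toScheme} (h : ptCls C x = ptCls D y) :
    BirEquiv C D := by
  obtain ⟨W, a, b, ha, hb, hab, w, h1, h2⟩ := Quotient.exact (s := ptSetoid k) h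
  refine ⟨a.opensRange, b.opensRange, ?_, ?_, a.isoOpensRange.symm ≪≫ b.isoOpensRange, ?_⟩
  · exact a.opensRange.isOpen.dense ⟨a w, w, rfl⟩
  · exact b.opensRange.isOpen.dense ⟨b w, w, rfl⟩
  · have hb' : b.isoOpensRange.hom ≫ b.opensRange.ι = b := by simp
    have ha' : a.isoOpensRange.inv ≫ a = a.opensRange.ι := by simp
    rw [← ha', Category.assoc]
    simp only [Iso.trans_hom, Iso.symm_hom, Category.assoc]
    rw [reassoc_of% hb', ← hab]

lemma realizes_aux {n : ℕ} {X : Variety k} (hX : X.dim ≤ (n : WithBot ℕ∞)) {a : ℕ}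
    {C : Fin a → Variety k} {f : ∀ i, (C i).toScheme ⟶ X.toScheme}
    (hC : RealizesComponents n X a C f) :
    ∃ γ : ∀ i, (C i).toScheme, (∀ i, IrreducibleSpace (C i).toScheme) ∧
      ∀ c, (ptSet n X c).ncard = Nat.card {i // ptCls (C i) (γ i) = c} := by
  obtain ⟨hcl, hstr, hinj, hrange⟩ := hC
  have hmem : ∀ i, Set.range (f i) ∈ irreducibleComponents X.toScheme ∧
      topologicalKrullDim (Set.range (f i)) = (n : WithBot ℕ∞) := by
    intro i
    have : Set.range (f i) ∈ (Set.range fun i => Set.range (f i).base) := ⟨i, rfl⟩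
    rw [hrange] at this
    exact this
  have hirr : ∀ i, IrreducibleSpace (C i).toScheme := by
    intro i
    have hpre : IsIrreducible (Set.univ : Set (C i).toScheme) := by
      have hsub : IrreducibleSpace (Set.range (f i)) := Subtype.irreducibleSpace (hmem i).1.1
      let e := (f i).isClosedEmbedding.isEmbedding.toHomeomorph
      have h := ((irreducibleSpace_def _).mp hsub).image e.symm e.symm.continuous.continuousOn
      rwa [Set.top_eq_univ, Set.image_univ, e.symm.surjective.range_eq] at h
    exact (irreducibleSpace_def _).mpr hpre
  refine ⟨fun i => genericPoint (C i).toScheme, hirr, fun c => ?_⟩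
  let x : Fin a → X.toScheme := fun i => f i (genericPoint (C i).toScheme)
  have hx : ∀ i, closure {x i} = Set.range (f i) := by
    intro i
    have := (f i).isClosedEmbedding.closure_image_eq {genericPoint (C i).toScheme}
    rw [Set.image_singleton, genericPoint_closure, Set.image_univ] at this
    exact this
  have hxinj : Function.Injective x := by
    intro i j hij
    refine hinj ?_
    change Set.range (f i) = Set.range (f j)
    rw [← hx, ← hx, hij]
  have heq : ptSet n X c = x '' {i | ptCls (C i) (genericPoint (C i).toScheme) = c} := by
    ext z
    constructor
    · rintro ⟨h1, h2⟩
      have hz : closure {z} ∈ (Set.range fun i => Set.range (f i).base) := by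
        rw [hrange]; exact ⟨dimaux_component hX h1, h1⟩
      obtain ⟨i, hi⟩ := hz
      have hi' : Set.range (f i) = closure {z} := hi
      have hxz : x i = z := (inseparable_iff_closure_eq.mpr ((hx i).trans hi')).eq
      refine ⟨i, ?_, hxz⟩
      rw [Set.mem_ofPred_eq, ← h2, ← hxz]
      exact (ptCls_closed (f i) (hstr i) _ (by rw [hx i]; exact (hmem i).1)).symm
    · rintro ⟨i, hi, rfl⟩
      refine ⟨by rw [hx i]; exact (hmem i).2, ?_⟩
      rw [← hi]
      exact ptCls_closed (f i) (hstr i) _ (by rw [hx i]; exact (hmem i).1)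
  rw [heq, Set.ncard_image_of_injective _ hxinj]
  rfl

end Variety

/-- If `[X] = [Y]` in `K_0(V_k^{(n,n-1)})` for varieties of dimension
at most `n`, then `X` and `Y` have the same number of `n`-dimensional irreducible
components, and there is a bijection between them under which corresponding components
are birationally isomorphic. -/
theorem components_birEquiv_of_eq_K0graded (k : Type u) [Field k] (n : ℕ)
    (X Y : Variety k)
    (hX : X.dim ≤ (n : WithBot ℕ∞)) (hY : Y.dim ≤ (n : WithBot ℕ∞))
    (h : K0graded.cls n X hX = K0graded.cls n Y hY)
    (a b : ℕ) (C : Fin a → Variety k) (D : Fin b → Variety k)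
    (f : ∀ i, (C i).toScheme ⟶ X.toScheme) (g : ∀ i, (D i).toScheme ⟶ Y.toScheme)
    (hC : RealizesComponents n X a C f) (hD : RealizesComponents n Y b D g) :
    a = b ∧ ∃ σ : Fin a ≃ Fin b, ∀ i, BirEquiv (C i) (D (σ i)) := by
  obtain ⟨γ, hγ, hγc⟩ := realizes_aux hX hC
  obtain ⟨δ, hδ, hδc⟩ := realizes_aux hY hD
  have key : ∀ c, Nonempty ({i // ptCls (C i) (γ i) = c} ≃ {i // ptCls (D i) (δ i) = c}) := by
    intro c
    rw [← Finite.card_eq]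
    rw [← hγc, ← hδc]
    exact ptSet_eq_of_cls_eq hX hY h c
  let σ : Fin a ≃ Fin b := Equiv.ofFiberEquiv (fun c => (key c).some)
  refine ⟨by simpa using Fintype.card_congr σ, σ, fun i => ?_⟩
  have hσ : ptCls (D (σ i)) (δ (σ i)) = ptCls (C i) (γ i) :=
    Equiv.ofFiberEquiv_map (f := fun i => ptCls (C i) (γ i)) (g := fun i => ptCls (D i) (δ i))
      (fun c => (key c).some) i
  exact birEquiv_of_ptCls hσ.symm
end
end

section
/- Let k be a convenient field, let X and X' be smooth projective irreducible varieties over k of dimension n−1, and let φ: X × 𝔸¹ ⇢ X' × 𝔸¹ be a birational isomorphism represented by an isomorphism U → V of dense open subvarieties. Then in K_0(V_k^{(n−1)}) one has [(X' × 𝔸¹)∖V] − [(X × 𝔸¹)∖U] ≡ [X] − [X'] modulo the image of multiplication by L : K_0(V_k^{(n−2)}) → K_0(V_k^{(n−1)}). -/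
open AlgebraicGeometry CategoryTheory CategoryTheory.Limits

noncomputable section

universe u

open Variety


/-! ## Topological dimension -/

theorem seg_dim_le_of_cover {X : Type*} [TopologicalSpace X] {ι : Type*} (Y : ι → Type*)
    [∀ i, TopologicalSpace (Y i)] (f : ∀ i, Y i → X)
    (hf : ∀ i, Topology.IsOpenEmbedding (f i)) (hc : ∀ x, ∃ i, x ∈ Set.range (f i))
    (d : WithBot ℕ∞) (hd : ∀ i, topologicalKrullDim (Y i) ≤ d) :
    topologicalKrullDim X ≤ d := by
  unfold topologicalKrullDim
  rw [Order.krullDim_eq_iSup_coheight]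
  refine iSup_le fun Z => ?_
  obtain ⟨x, hx⟩ := Z.2.nonempty
  obtain ⟨i, y, rfl⟩ := hc x
  let T := (TopologicalSpace.IrreducibleCloseds.orderIsoOfIsOpenEmbedding (f i) (hf i)).symm
    ⟨Z, ⟨y, hx⟩⟩
  have hT : TopologicalSpace.IrreducibleCloseds.map (f i) (hf i).continuous T = Z :=
    congrArg Subtype.val
      ((TopologicalSpace.IrreducibleCloseds.orderIsoOfIsOpenEmbedding (f i) (hf i)).apply_symm_apply
        ⟨Z, ⟨y, hx⟩⟩)
  rw [← hT, (hf i).coheight_map]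
  exact (Order.coheight_le_krullDim T).trans (hd i)

theorem seg_dim_add_one_le {Z P : Type*} [TopologicalSpace Z] [TopologicalSpace P]
    [IrreducibleSpace P] (f : Z → P) (hf : Topology.IsClosedEmbedding f)
    (hne : Set.range f ≠ Set.univ) :
    topologicalKrullDim Z + 1 ≤ topologicalKrullDim P := by
  unfold topologicalKrullDim
  cases isEmpty_or_nonempty (TopologicalSpace.IrreducibleCloseds Z) with
  | inl h => simp [Order.krullDim_eq_bot]
  | inr h =>
    rw [← Order.krullDim_WithTop]
    let top : TopologicalSpace.IrreducibleCloseds P :=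
      ⟨Set.univ, IrreducibleSpace.isIrreducible_univ P, isClosed_univ⟩
    let g : WithTop (TopologicalSpace.IrreducibleCloseds Z) →
        TopologicalSpace.IrreducibleCloseds P := fun z =>
      WithTop.recTopCoe top
        (fun T => TopologicalSpace.IrreducibleCloseds.map f hf.continuous T) z
    refine Order.krullDim_le_of_strictMono g ?_
    intro a b hab
    induction b using WithTop.recTopCoe with
    | top =>
      induction a using WithTop.recTopCoe with
      | top => exact absurd hab (lt_irrefl _)
      | coe a =>
        change TopologicalSpace.IrreducibleCloseds.map f hf.continuous a < top
        refine lt_of_le_of_ne (fun x _ => trivial) fun he => hne ?_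
        have h1 : closure (f '' (a : Set Z)) = Set.univ :=
          congrArg (fun t : TopologicalSpace.IrreducibleCloseds P => (t : Set P)) he
        rw [Set.eq_univ_iff_forall]
        intro x
        have hx : x ∈ closure (f '' (a : Set Z)) := h1 ▸ Set.mem_univ x
        exact closure_minimal (Set.image_subset_range f _) hf.isClosed_range hx
    | coe b =>
      induction a using WithTop.recTopCoe with
      | top => exact absurd hab (not_lt_of_ge le_top)
      | coe a =>
        exact TopologicalSpace.IrreducibleCloseds.map_strictMono_of_isInducing
          hf.isInducing (WithTop.coe_lt_coe.mp hab)

theorem seg_dim_iso {X Y : Scheme.{u}} (e : X ≅ Y) :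
    topologicalKrullDim X = topologicalKrullDim Y :=
  IsHomeomorph.topologicalKrullDim_eq _ (Scheme.homeoOfIso e).isHomeomorph

theorem seg_add_one_le_iff (x : WithBot ℕ∞) (n : ℕ) :
    x + 1 ≤ ((n + 1 : ℕ) : WithBot ℕ∞) ↔ x ≤ (n : WithBot ℕ∞) := by
  induction x using WithBot.recBotCoe with
  | bot => simp
  | coe x =>
    induction x using ENat.recTopCoe with
    | top =>
      simp only [Nat.cast_add, Nat.cast_one]
      refine iff_of_false (fun h => ?_) (fun h => ?_)
      · have h2 : (⊤ : ℕ∞) + 1 ≤ ((n + 1 : ℕ) : ℕ∞) := by exact_mod_cast h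
        exact absurd h2 (by simp)
      · have h2 : (⊤ : ℕ∞) ≤ (n : ℕ∞) := by exact_mod_cast h
        exact absurd h2 (by simp)
    | coe x => norm_cast; simp

theorem seg_add_one_le_zero (x : WithBot ℕ∞) (h : x + 1 ≤ 0) : x = ⊥ := by
  induction x using WithBot.recBotCoe with
  | bot => rfl
  | coe x =>
    exfalso
    have h2 : x + 1 ≤ 0 := by exact_mod_cast h
    simp at h2

theorem seg_add_one_le_of_forall {ι : Type*} (x : WithBot ℕ∞) (y : ι → WithBot ℕ∞)
    (h : ∀ d, (∀ i, y i ≤ d) → x ≤ d) (c : WithBot ℕ∞) (hc : ∀ i, y i + 1 ≤ c) :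
    x + 1 ≤ c := by
  have hbot : (∀ i, y i + 1 ≤ 0) → x + 1 ≤ ⊥ := by
    intro h0
    have : x ≤ ⊥ := h ⊥ fun i => (seg_add_one_le_zero _ (h0 i)).le
    rw [le_bot_iff] at this
    simp [this]
  induction c using WithBot.recBotCoe with
  | bot => exact hbot fun i => (hc i).trans bot_le
  | coe c =>
    induction c using ENat.recTopCoe with
    | top => exact le_top
    | coe c =>
      cases c with
      | zero => exact (hbot fun i => hc i).trans bot_le
      | succ n =>
        exact (seg_add_one_le_iff x n).mpr (h _ fun i => (seg_add_one_le_iff _ n).mp (hc i))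

/-- dimension of relative affine line -/
theorem seg_dim_affineSpace (X : Scheme.{u}) [IsLocallyNoetherian X] :
    topologicalKrullDim 𝔸(PUnit.{u+1}; X) = topologicalKrullDim X + 1 := by
  have key : ∀ i : X.affineCover.I₀,
      topologicalKrullDim 𝔸(PUnit.{u+1}; X.affineCover.X i) =
        topologicalKrullDim (X.affineCover.X i) + 1 := by
    intro i
    have hN : IsNoetherianRing (X.affineOpenCover.X i) := by
      have : IsLocallyNoetherian (X.affineCover.X i) := inferInstance
      exact isLocallyNoetherian_Spec.mp this
    change topologicalKrullDim 𝔸(PUnit.{u+1}; Spec (X.affineOpenCover.X i)) =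
        topologicalKrullDim (Spec (X.affineOpenCover.X i)) + 1
    rw [seg_dim_iso (AffineSpace.SpecIso PUnit.{u+1} (X.affineOpenCover.X i))]
    have h1 := PrimeSpectrum.topologicalKrullDim_eq_ringKrullDim
      (R := MvPolynomial PUnit.{u+1} (X.affineOpenCover.X i))
    have h2 := PrimeSpectrum.topologicalKrullDim_eq_ringKrullDim
      (R := (X.affineOpenCover.X i))
    have h3 := MvPolynomial.ringKrullDim_of_isNoetherianRing
      (R := (X.affineOpenCover.X i)) (ι := PUnit.{u+1})
    refine h1.trans (h3.trans ?_)
    rw [← h2]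
    simp
    rfl
  have hemb : ∀ i, Topology.IsOpenEmbedding (X.affineCover.f i) := fun i =>
    (X.affineCover.f i).isOpenEmbedding
  have hoi : ∀ i, IsOpenImmersion (AffineSpace.map PUnit.{u+1} (X.affineCover.f i)) := fun i =>
    MorphismProperty.of_isPullback (P := @IsOpenImmersion)
      (AffineSpace.isPullback_map (X.affineCover.f i)).flip inferInstance
  apply le_antisymm
  · refine seg_dim_le_of_cover (fun i => 𝔸(PUnit.{u+1}; X.affineCover.X i))
      (fun i => AffineSpace.map PUnit.{u+1} (X.affineCover.f i))
      (fun i => (AffineSpace.map PUnit.{u+1} (X.affineCover.f i)).isOpenEmbedding) ?_ _ ?_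
    · intro x
      obtain ⟨i, y, hy⟩ := X.affineCover.exists_eq ((𝔸(PUnit.{u+1}; X) ↘ X) x)
      refine ⟨i, ?_⟩
      have := (AffineSpace.isPullback_map (n := PUnit.{u+1}) (X.affineCover.f i))
      obtain ⟨z, hz, _⟩ := Scheme.Pullback.exists_preimage_pullback x y hy.symm
      refine ⟨this.isoPullback.inv z, ?_⟩
      rw [← hz, ← Scheme.Hom.comp_apply, this.isoPullback_inv_fst]
    · intro i
      rw [key]
      gcongr
      exact (hemb i).isInducing.topologicalKrullDim_le
  · refine seg_add_one_le_of_forall (topologicalKrullDim X)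
      (fun i => topologicalKrullDim (X.affineCover.X i)) ?_ _ ?_
    · intro d hd
      exact seg_dim_le_of_cover (fun i => X.affineCover.X i) (fun i => X.affineCover.f i) hemb
        (fun x => by
          obtain ⟨i, y, hy⟩ := X.affineCover.exists_eq x
          exact ⟨i, y, hy⟩) _ hd
    · intro i
      rw [← key]
      exact (AffineSpace.map PUnit.{u+1} (X.affineCover.f i)).isOpenEmbedding.isInducing.topologicalKrullDim_le

/-! ## Affine lines -/

/-- `a` is isomorphic to the structure morphism of the affine line -/
def SegLine {k : Type u} [Field k] {B : Scheme.{u}} (a : B ⟶ Spec (CommRingCat.of k)) : Prop :=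
  ∃ e : B ≅ Spec (CommRingCat.of (Polynomial k)),
    e.hom ≫ Spec.map (CommRingCat.ofHom (algebraMap k (Polynomial k))) = a

theorem seg_line_isPullback {k : Type u} [Field k] {B X : Scheme.{u}}
    (a : B ⟶ Spec (CommRingCat.of k)) (ha : SegLine a) (x : X ⟶ Spec (CommRingCat.of k)) :
    Nonempty (pullback x a ≅ 𝔸(PUnit.{u+1}; X)) := by
  obtain ⟨e, he⟩ := ha
  let e2 : B ≅ 𝔸(PUnit.{u+1}; Spec (CommRingCat.of k)) :=
    e ≪≫ Scheme.Spec.mapIso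
      ((MvPolynomial.uniqueAlgEquiv.{u, u} k PUnit.{u+1}).toRingEquiv.toCommRingCatIso.op) ≪≫
      (AffineSpace.SpecIso PUnit.{u+1} (CommRingCat.of k)).symm
  have he2 : e2.hom ≫ (𝔸(PUnit.{u+1}; Spec (CommRingCat.of k)) ↘ Spec (CommRingCat.of k)) = a := by
    simp only [e2, Iso.trans_hom, Category.assoc, Iso.symm_hom, AffineSpace.SpecIso_inv_over,
      Functor.mapIso_hom, Scheme.Spec_map]
    rw [← he]
    congr 1
    change Spec.map _ ≫ Spec.map _ = _
    rw [← Spec.map_comp]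
    congr 1
    refine CommRingCat.hom_ext (RingHom.ext fun r => ?_)
    exact (MvPolynomial.uniqueAlgEquiv k PUnit.{u+1}).commutes r
  have hp := (AffineSpace.isPullback_map (n := PUnit.{u+1}) x).flip
  let e3 : pullback x a ≅
      pullback x (𝔸(PUnit.{u+1}; Spec (CommRingCat.of k)) ↘ Spec (CommRingCat.of k)) :=
    asIso (pullback.map x a x _ (𝟙 _) e2.hom (𝟙 _) (by simp) (by simp [he2]))
  exact ⟨e3 ≪≫ hp.isoPullback.symm⟩

theorem seg_line_irred {k : Type u} [Field k] {B X : Scheme.{u}} [IrreducibleSpace X]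
    (a : B ⟶ Spec (CommRingCat.of k)) (ha : SegLine a) (x : X ⟶ Spec (CommRingCat.of k)) :
    IrreducibleSpace ↥(pullback x a) := by
  obtain ⟨e⟩ := seg_line_isPullback a ha x
  exact (Scheme.homeoOfIso e).symm.surjective.irreducibleSpace
    (Scheme.homeoOfIso e).symm.continuous

theorem seg_line_reduced {k : Type u} [Field k] {B B' X : Scheme.{u}}
    (a : B ⟶ Spec (CommRingCat.of k)) (ha : SegLine a)
    (b : B' ⟶ Spec (CommRingCat.of k)) (hb : SegLine b) (x : X ⟶ Spec (CommRingCat.of k))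
    (h : IsReduced (pullback x a)) : IsReduced (pullback x b) := by
  obtain ⟨e⟩ := seg_line_isPullback a ha x
  obtain ⟨e'⟩ := seg_line_isPullback b hb x
  exact isReduced_of_isOpenImmersion (e'.hom ≫ e.inv)

theorem seg_line_dim {k : Type u} [Field k] {B X : Scheme.{u}}
    (a : B ⟶ Spec (CommRingCat.of k)) (ha : SegLine a) (x : X ⟶ Spec (CommRingCat.of k))
    [LocallyOfFiniteType x] :
    topologicalKrullDim ↥(pullback x a) = topologicalKrullDim X + 1 := by
  obtain ⟨e⟩ := seg_line_isPullback a ha x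
  have : IsLocallyNoetherian X := LocallyOfFiniteType.isLocallyNoetherian x
  rw [seg_dim_iso e, seg_dim_affineSpace]

theorem seg_line_smooth {k : Type u} [Field k] {B : Scheme.{u}}
    (a : B ⟶ Spec (CommRingCat.of k)) (ha : SegLine a) : Smooth a := by
  obtain ⟨e, rfl⟩ := ha
  have : Smooth (Spec.map (CommRingCat.ofHom (algebraMap k (Polynomial k)))) := by
    rw [HasRingHomProperty.Spec_iff (P := @Smooth)]
    simp only [CommRingCat.hom_ofHom]
    rw [RingHom.smooth_algebraMap]
    exact { }
  infer_instance


/-! ## Morphisms to `Proj` -/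

section SegProj

open HomogeneousLocalization

variable {σ : Type*} {A : Type u} [CommRing A] [SetLike σ A] [AddSubgroupClass σ A]
  (𝒜 : ℕ → σ) [GradedRing 𝒜]

/-- the morphism `A_(t) → R` induced by `f : A → R` with `f t` a unit -/
def segAwayHom {R : Type u} [CommRing R] (f : A →+* R) (t : A) (hu : IsUnit (f t)) :
    Away 𝒜 t →+* R :=
  (IsLocalization.Away.lift (S := Localization.Away t) t hu).comp
    (algebraMap (Away 𝒜 t) (Localization.Away t))

theorem segAwayHom_mk {R : Type u} [CommRing R] (f : A →+* R) (t : A) (hu : IsUnit (f t))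
    {d : ℕ} (ht : t ∈ 𝒜 d) (n : ℕ) (x : A) (hx : x ∈ 𝒜 (n • d)) :
    segAwayHom 𝒜 f t hu (Away.mk 𝒜 ht n x hx) * f t ^ n = f x := by
  have h : IsLocalization.Away.lift (S := Localization.Away t) t hu
      ((Localization.mk x (⟨t ^ n, n, rfl⟩ : Submonoid.powers t)) * algebraMap A _ (t ^ n)) = f x := by
    rw [← Localization.mk_one_eq_algebraMap, Localization.mk_mul]
    have : Localization.mk (x * t ^ n) ((⟨t ^ n, n, rfl⟩ : Submonoid.powers t) * 1)
        = algebraMap A _ x := by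
      rw [← Localization.mk_one_eq_algebraMap, Localization.mk_eq_mk_iff, Localization.r_iff_exists]
      exact ⟨1, by simp; ring⟩
    rw [this, IsLocalization.Away.lift_eq]
  rw [map_mul, IsLocalization.Away.lift_eq, map_pow] at h
  simpa [segAwayHom] using h

theorem segAwayHom_unique {R : Type u} [CommRing R] (f : A →+* R) (t : A) (hu : IsUnit (f t))
    {d : ℕ} (ht : t ∈ 𝒜 d) (φ : Away 𝒜 t →+* R)
    (h : ∀ (n : ℕ) (x : A) (hx : x ∈ 𝒜 (n • d)), φ (Away.mk 𝒜 ht n x hx) * f t ^ n = f x) :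
    φ = segAwayHom 𝒜 f t hu := by
  ext z
  obtain ⟨n, x, hx, rfl⟩ := Away.mk_surjective 𝒜 ht z
  apply (hu.pow n).mul_right_cancel
  rw [h, segAwayHom_mk]

/-- the morphism to `Proj` defined by `f : A → Γ(T, ⊤)` with `f t` a unit -/
def segToP (T : Scheme.{u}) (f : A →+* Γ(T, ⊤)) (t : A) (hu : IsUnit (f t)) {d : ℕ}
    (ht : t ∈ 𝒜 d) (hd : 0 < d) : T ⟶ Proj 𝒜 :=
  T.toSpecΓ ≫ Spec.map (CommRingCat.ofHom (segAwayHom 𝒜 f t hu)) ≫ Proj.awayι 𝒜 t ht hd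

theorem segToP_mul (T : Scheme.{u}) (f : A →+* Γ(T, ⊤)) (t s : A) (hu : IsUnit (f t))
    (hv : IsUnit (f s)) {d e : ℕ} (ht : t ∈ 𝒜 d) (hd : 0 < d) (hs : s ∈ 𝒜 e)
    (x : A) (hxe : x = t * s) (hw : IsUnit (f x)) (hx : x ∈ 𝒜 (d + e)) (hde : 0 < d + e) :
    segToP 𝒜 T f t hu ht hd = segToP 𝒜 T f x hw hx hde := by
  unfold segToP
  rw [← Proj.SpecMap_awayMap_awayι 𝒜 ht hd hs hxe, ← Spec.map_comp_assoc,
    ← CommRingCat.ofHom_comp]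
  congr 4
  symm
  apply segAwayHom_unique 𝒜 f t hu ht
  intro n a ha
  rw [RingHom.comp_apply, awayMap_mk]
  apply (hv.pow n).mul_right_cancel
  rw [mul_assoc, ← mul_pow, ← map_mul f t s, ← map_pow f s, ← map_mul f]
  refine Eq.trans ?_ (segAwayHom_mk 𝒜 f x hw hx n (a * s ^ n) (by
    rw [smul_add]; exact SetLike.mul_mem_graded ha (SetLike.pow_mem_graded n hs)))
  rw [← congrArg f hxe]

theorem segToP_indep (T : Scheme.{u}) (f : A →+* Γ(T, ⊤)) (t s : A) (hu : IsUnit (f t))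
    (hv : IsUnit (f s)) {d e : ℕ} (ht : t ∈ 𝒜 d) (hd : 0 < d) (hs : s ∈ 𝒜 e) (he : 0 < e) :
    segToP 𝒜 T f t hu ht hd = segToP 𝒜 T f s hv hs he := by
  have hw : IsUnit (f (t * s)) := by rw [map_mul]; exact hu.mul hv
  rw [segToP_mul 𝒜 T f t s hu hv ht hd hs (t * s) rfl hw (SetLike.mul_mem_graded ht hs)
      (by omega),
    segToP_mul 𝒜 T f s t hv hu hs he ht (t * s) (mul_comm _ _) hw
      (add_comm d e ▸ SetLike.mul_mem_graded ht hs) (by omega)]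
  congr 1
  omega

theorem segToP_scale (T : Scheme.{u}) (f g : A →+* Γ(T, ⊤)) (v : Γ(T, ⊤))
    (hfg : ∀ (n : ℕ) (a : A), a ∈ 𝒜 n → g a = v ^ n * f a)
    (t : A) (hu : IsUnit (f t)) (hu' : IsUnit (g t)) {d : ℕ} (ht : t ∈ 𝒜 d) (hd : 0 < d) :
    segToP 𝒜 T f t hu ht hd = segToP 𝒜 T g t hu' ht hd := by
  unfold segToP
  congr 4
  apply segAwayHom_unique 𝒜 g t hu' ht
  intro n a ha
  rw [hfg _ _ ha, hfg _ _ ht, mul_pow, ← segAwayHom_mk 𝒜 f t hu ht n a ha, ← pow_mul, smul_eq_mul,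
    mul_comm n d]
  ring

theorem segToP_comp (T T' : Scheme.{u}) (g : T' ⟶ T) (f : A →+* Γ(T, ⊤)) (t : A)
    (hu : IsUnit (f t)) {d : ℕ} (ht : t ∈ 𝒜 d) (hd : 0 < d) :
    g ≫ segToP 𝒜 T f t hu ht hd =
      segToP 𝒜 T' (g.appTop.hom.comp f) t (hu.map g.appTop.hom) ht hd := by
  unfold segToP
  rw [Scheme.toSpecΓ_naturality_assoc, ← Spec.map_comp_assoc]
  congr 3
  refine CommRingCat.hom_ext ?_
  apply segAwayHom_unique 𝒜 _ t (hu.map g.appTop.hom) ht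
  intro n a ha
  change g.appTop.hom (segAwayHom 𝒜 f t hu (Away.mk 𝒜 ht n a ha)) * g.appTop.hom (f t) ^ n
    = g.appTop.hom (f a)
  rw [← map_pow, ← map_mul, segAwayHom_mk]

theorem segToP_toSpecZero (T : Scheme.{u}) (f : A →+* Γ(T, ⊤)) (t : A)
    (hu : IsUnit (f t)) {d : ℕ} (ht : t ∈ 𝒜 d) (hd : 0 < d) :
    segToP 𝒜 T f t hu ht hd ≫ Proj.toSpecZero 𝒜 =
      T.toSpecΓ ≫ Spec.map (CommRingCat.ofHom (f.comp (algebraMap (𝒜 0) A))) := by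
  unfold segToP
  rw [Category.assoc, Category.assoc, Proj.awayι_toSpecZero, ← Spec.map_comp]
  congr 2
  refine CommRingCat.hom_ext (RingHom.ext fun a => ?_)
  have := segAwayHom_mk 𝒜 f t hu ht 0 a.1 (by simp)
  simp only [pow_zero, mul_one] at this
  refine Eq.trans ?_ this
  change segAwayHom 𝒜 f t hu _ = _
  congr 1
  apply HomogeneousLocalization.val_injective
  rw [Away.val_mk]
  change (HomogeneousLocalization.mk _).val = _
  rw [HomogeneousLocalization.val_mk]
  congr 1
  ext
  simp

theorem segToP_preimage (T : Scheme.{u}) (f : A →+* Γ(T, ⊤)) (t : A)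
    (hu : IsUnit (f t)) {d : ℕ} (ht : t ∈ 𝒜 d) (hd : 0 < d) (s : A) {e : ℕ} (hs : s ∈ 𝒜 e)
    (he : 0 < e) :
    segToP 𝒜 T f t hu ht hd ⁻¹ᵁ Proj.basicOpen 𝒜 s = T.basicOpen (f s) := by
  unfold segToP
  rw [Scheme.Hom.comp_preimage, Scheme.Hom.comp_preimage, Proj.awayι_preimage_basicOpen 𝒜 ht hd hs he]
  have : Spec.map (CommRingCat.ofHom (segAwayHom 𝒜 f t hu)) ⁻¹ᵁ
      PrimeSpectrum.basicOpen (Away.isLocalizationElem ht hs) =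
      PrimeSpectrum.basicOpen (segAwayHom 𝒜 f t hu (Away.isLocalizationElem ht hs)) := rfl
  rw [this, Scheme.toSpecΓ_preimage_basicOpen]
  have h := segAwayHom_mk 𝒜 f t hu ht e (s ^ d)
    (by rw [smul_eq_mul, mul_comm]; exact SetLike.pow_mem_graded d hs)
  have h2 : T.basicOpen (segAwayHom 𝒜 f t hu (Away.isLocalizationElem ht hs)) =
    T.basicOpen (segAwayHom 𝒜 f t hu (Away.isLocalizationElem ht hs) * f t ^ e) := by
    rw [Scheme.basicOpen_mul, Scheme.basicOpen_of_isUnit _ (hu.pow e)]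
    simp
  rw [h2]
  refine (congrArg T.basicOpen h).trans ?_
  rw [map_pow, Scheme.basicOpen_pow _ _ hd]

end SegProj


/-! ## Morphisms to projective space -/

/-- the ring map corresponding to a morphism to an affine scheme -/
def segGam {R : Type u} [CommRing R] {T : Scheme.{u}} (φ : T ⟶ Spec (CommRingCat.of R)) :
    R →+* Γ(T, ⊤) :=
  φ.appTop.hom.comp (Scheme.ΓSpecIso (CommRingCat.of R)).inv.hom

theorem segGam_comp {R : Type u} [CommRing R] {T T' : Scheme.{u}} (g : T' ⟶ T)
    (φ : T ⟶ Spec (CommRingCat.of R)) :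
    segGam (g ≫ φ) = g.appTop.hom.comp (segGam φ) := by
  unfold segGam
  rw [Scheme.Hom.comp_appTop]
  rfl

theorem segGam_Spec {R S : Type u} [CommRing R] [CommRing S] {T : Scheme.{u}}
    (φ : T ⟶ Spec (CommRingCat.of R)) (h : S →+* R) :
    segGam (φ ≫ Spec.map (CommRingCat.ofHom h)) = (segGam φ).comp h := by
  unfold segGam
  rw [Scheme.Hom.comp_appTop]
  have := Scheme.ΓSpecIso_inv_naturality (CommRingCat.ofHom h)
  have h2 : (Spec.map (CommRingCat.ofHom h)).appTop.hom.comp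
      (Scheme.ΓSpecIso (CommRingCat.of S)).inv.hom =
      (Scheme.ΓSpecIso (CommRingCat.of R)).inv.hom.comp h :=
    (congrArg CommRingCat.Hom.hom this).symm
  rw [CommRingCat.hom_comp, RingHom.comp_assoc, h2, RingHom.comp_assoc]

theorem segGam_toSpec {R : Type u} [CommRing R] {T : Scheme.{u}}
    (φ : T ⟶ Spec (CommRingCat.of R)) :
    T.toSpecΓ ≫ Spec.map (CommRingCat.ofHom (segGam φ)) = φ := by
  unfold segGam
  rw [CommRingCat.ofHom_comp, Spec.map_comp]
  change T.toSpecΓ ≫ Spec.map φ.appTop ≫ Spec.map (Scheme.ΓSpecIso (CommRingCat.of R)).inv = φ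
  rw [← Scheme.toSpecΓ_naturality_assoc, toSpecΓ_SpecMap_ΓSpecIso_inv]
  simp

section SegPoly

open HomogeneousLocalization MvPolynomial

attribute [local instance] MvPolynomial.gradedAlgebra

theorem seg_hom_scale {ι : Type} {k R : Type u} [Field k] [CommRing R]
    (f g : MvPolynomial ι k →+* R) (v : R) (hC : ∀ c, g (C c) = f (C c))
    (hX : ∀ a, g (X a) = v * f (X a)) (n : ℕ) (p : MvPolynomial ι k)
    (hp : p ∈ homogeneousSubmodule ι k n) : g p = v ^ n * f p := by
  rw [mem_homogeneousSubmodule] at hp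
  rw [p.as_sum, map_sum, map_sum, Finset.mul_sum]
  refine Finset.sum_congr rfl fun s hs => ?_
  have hdeg := hp (mem_support_iff.mp hs)
  rw [monomial_eq, map_mul, map_mul, hC, Finsupp.prod, map_prod, map_prod]
  simp only [map_pow, hX, mul_pow]
  rw [Finset.prod_mul_distrib, Finset.prod_pow_eq_pow_sum]
  have : ∑ i ∈ s.support, s i = n := by
    rw [← hdeg, Finsupp.weight_apply, Finsupp.sum]
    simp
  rw [this]
  ring

theorem seg_X_mem {ι : Type} {k : Type u} [Field k] (i : ι) :
    (X i : MvPolynomial ι k) ∈ homogeneousSubmodule ι k 1 :=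
  (mem_homogeneousSubmodule _ _).2 (isHomogeneous_X k i)

variable {ι : Type} {k : Type u} [Field k]

/-- constants -/
def segKAway (k : Type u) [Field k] (t : MvPolynomial ι k) :
    k →+* Away (homogeneousSubmodule ι k) t :=
  (fromZeroRingHom (homogeneousSubmodule ι k) _).comp
    (algebraMap k (homogeneousSubmodule ι k 0))

theorem segKAway_val (t : MvPolynomial ι k) (c : k) :
    (segKAway k t c).val = algebraMap (MvPolynomial ι k) (Localization.Away t) (C c) := by
  change (HomogeneousLocalization.mk _).val = _
  rw [HomogeneousLocalization.val_mk, ← Localization.mk_one_eq_algebraMap]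
  rfl

/-- dehomogenisation -/
def segDel (i : ι) : MvPolynomial ι k →+* Away (homogeneousSubmodule ι k) (X i) :=
  eval₂Hom (segKAway k (X i)) fun a =>
    Away.mk (homogeneousSubmodule ι k) (seg_X_mem i) 1 (X a) (seg_X_mem a)

theorem segDel_C (i : ι) (c : k) : segDel i (C c) = segKAway k (X i) c := by
  simp [segDel]

theorem segDel_X (i a : ι) : segDel (k := k) i (X a) =
    Away.mk (homogeneousSubmodule ι k) (seg_X_mem i) 1 (X a) (seg_X_mem a) := by
  simp [segDel]

theorem segDel_homog (i : ι) (n : ℕ) (p : MvPolynomial ι k)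
    (hp : p ∈ homogeneousSubmodule ι k (n • 1)) :
    segDel i p = Away.mk (homogeneousSubmodule ι k) (seg_X_mem i) n p hp := by
  have h := seg_hom_scale ((algebraMap (Away (homogeneousSubmodule ι k) (X i))
    (Localization.Away (X i : MvPolynomial ι k))).comp (segDel i))
    (algebraMap (MvPolynomial ι k) (Localization.Away (X i : MvPolynomial ι k)))
    (algebraMap _ _ (X i)) (fun c => by
      rw [RingHom.comp_apply, segDel_C, HomogeneousLocalization.algebraMap_apply, segKAway_val])
    (fun a => by
      rw [RingHom.comp_apply, segDel_X, HomogeneousLocalization.algebraMap_apply, Away.val_mk,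
        ← Localization.mk_one_eq_algebraMap, ← Localization.mk_one_eq_algebraMap,
        Localization.mk_mul, Localization.mk_eq_mk_iff, Localization.r_iff_exists]
      exact ⟨1, by simp⟩) _ p hp
  apply HomogeneousLocalization.val_injective
  rw [Away.val_mk]
  rw [RingHom.comp_apply, HomogeneousLocalization.algebraMap_apply] at h
  have hu : IsUnit (algebraMap (MvPolynomial ι k) (Localization.Away (X i : MvPolynomial ι k))
      (X i)) := IsLocalization.Away.algebraMap_isUnit _
  apply (hu.pow (n • 1)).mul_left_cancel
  rw [← h, ← map_pow, ← Localization.mk_one_eq_algebraMap, ← Localization.mk_one_eq_algebraMap,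
        Localization.mk_mul, Localization.mk_eq_mk_iff, Localization.r_iff_exists]
  exact ⟨1, by simp⟩

theorem segDel_X_self (i : ι) : segDel (k := k) i (X i) = 1 := by
  rw [segDel_X]
  apply HomogeneousLocalization.val_injective
  rw [Away.val_mk, HomogeneousLocalization.val_one]
  simp [Localization.mk_self_mk]

theorem segDel_surjective (i : ι) : Function.Surjective (segDel (k := k) i) := by
  intro z
  obtain ⟨n, x, hx, rfl⟩ := Away.mk_surjective (homogeneousSubmodule ι k) (seg_X_mem i) z
  exact ⟨x, segDel_homog i n x hx⟩

/-- the coordinates of a morphism to a chart -/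
def segPt (i : ι) {T : Scheme.{u}}
    (φ : T ⟶ Spec (CommRingCat.of (Away (homogeneousSubmodule ι k) (X i)))) :
    MvPolynomial ι k →+* Γ(T, ⊤) :=
  (segGam φ).comp (segDel i)

theorem segPt_X_self (i : ι) {T : Scheme.{u}}
    (φ : T ⟶ Spec (CommRingCat.of (Away (homogeneousSubmodule ι k) (X i)))) :
    segPt i φ (X i) = 1 := by
  change segGam φ (segDel i (X i)) = 1
  rw [segDel_X_self, map_one]

theorem segPt_unit (i : ι) {T : Scheme.{u}}
    (φ : T ⟶ Spec (CommRingCat.of (Away (homogeneousSubmodule ι k) (X i)))) :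
    IsUnit (segPt i φ (X i)) := by
  rw [segPt_X_self]; exact isUnit_one

theorem segPt_comp (i : ι) {T T' : Scheme.{u}} (g : T' ⟶ T)
    (φ : T ⟶ Spec (CommRingCat.of (Away (homogeneousSubmodule ι k) (X i)))) :
    segPt i (g ≫ φ) = g.appTop.hom.comp (segPt i φ) := by
  unfold segPt
  rw [segGam_comp, RingHom.comp_assoc]

theorem segPt_awayι (i : ι) {T : Scheme.{u}}
    (φ : T ⟶ Spec (CommRingCat.of (Away (homogeneousSubmodule ι k) (X i)))) :
    φ ≫ Proj.awayι (homogeneousSubmodule ι k) (X i) (seg_X_mem i) Nat.one_pos =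
      segToP (homogeneousSubmodule ι k) T (segPt i φ) (X i) (segPt_unit i φ) (seg_X_mem i)
        Nat.one_pos := by
  have h1 : Proj.awayι (homogeneousSubmodule ι k) (X i) (seg_X_mem i) Nat.one_pos =
      segToP (homogeneousSubmodule ι k) _ (segPt i (𝟙 _)) (X i) (segPt_unit i (𝟙 _)) (seg_X_mem i)
        Nat.one_pos := by
    unfold segToP
    have : segGam (𝟙 (Spec (CommRingCat.of (Away (homogeneousSubmodule ι k) (X i))))) =
        segAwayHom (homogeneousSubmodule ι k) (segPt i (𝟙 _)) (X i) (segPt_unit i (𝟙 _)) := by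
      apply segAwayHom_unique (homogeneousSubmodule ι k) _ _ _ (seg_X_mem i)
      intro n x hx
      rw [segPt_X_self, one_pow, mul_one, ← segDel_homog]; rfl
    rw [← this, ← Category.assoc, segGam_toSpec]
    simp
  conv_lhs => rw [h1]
  rw [segToP_comp]
  congr 1

theorem segPt_C (i : ι) {T : Scheme.{u}}
    (φ : T ⟶ Spec (CommRingCat.of (Away (homogeneousSubmodule ι k) (X i)))) (c : k) :
    segPt i φ (C c) = (segGam φ) (segKAway k (X i) c) := by
  change (segGam φ) (segDel i (C c)) = _
  rw [segDel_C]

theorem segPt_change (i j : ι) {T : Scheme.{u}}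
    (φ : T ⟶ Spec (CommRingCat.of (Away (homogeneousSubmodule ι k) (X i))))
    (ψ : T ⟶ Spec (CommRingCat.of (Away (homogeneousSubmodule ι k) (X j))))
    (h : φ ≫ Proj.awayι (homogeneousSubmodule ι k) (X i) (seg_X_mem i) Nat.one_pos =
      ψ ≫ Proj.awayι (homogeneousSubmodule ι k) (X j) (seg_X_mem j) Nat.one_pos) :
    (∀ c, segPt j ψ (C c) = segPt i φ (C c)) ∧
      ∃ v : Γ(T, ⊤), IsUnit v ∧ ∀ a, segPt j ψ (X a) = v * segPt i φ (X a) := by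
  let χ : T ⟶ Spec (CommRingCat.of (Away (homogeneousSubmodule ι k) (X i * X j))) :=
    pullback.lift φ ψ h ≫ (Proj.pullbackAwayιIso (homogeneousSubmodule ι k) (seg_X_mem i)
      Nat.one_pos (seg_X_mem j) Nat.one_pos rfl).hom
  have h1 : χ ≫ Spec.map (CommRingCat.ofHom
      (awayMap (homogeneousSubmodule ι k) (seg_X_mem j) rfl)) = φ := by
    simp only [χ, Category.assoc]
    rw [Proj.pullbackAwayιIso_hom_SpecMap_awayMap_left]
    exact pullback.lift_fst _ _ _
  have h2 : χ ≫ Spec.map (CommRingCat.ofHom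
      (awayMap (homogeneousSubmodule ι k) (seg_X_mem i) (mul_comm _ _))) = ψ := by
    simp only [χ, Category.assoc]
    rw [Proj.pullbackAwayιIso_hom_SpecMap_awayMap_right]
    exact pullback.lift_snd _ _ _
  let q : Away (homogeneousSubmodule ι k) (X i * X j) →+* Γ(T, ⊤) :=
    segGam χ
  have e1 : segPt i φ = (q.comp (awayMap (homogeneousSubmodule ι k) (seg_X_mem j) rfl)).comp
      (segDel i) := by
    rw [← segGam_Spec, h1]; rfl
  have e2 : segPt j ψ = (q.comp (awayMap (homogeneousSubmodule ι k) (seg_X_mem i)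
      (mul_comm _ _))).comp (segDel j) := by
    rw [← segGam_Spec, h2]; rfl
  have hm : (X i * X j : MvPolynomial ι k) ∈ homogeneousSubmodule ι k (1 + 1) :=
    SetLike.mul_mem_graded (seg_X_mem i) (seg_X_mem j)
  refine ⟨fun c => ?_, ?_⟩
  · rw [e1, e2]
    simp only [RingHom.comp_apply, segDel_C, segKAway]
    rw [awayMap_fromZeroRingHom, awayMap_fromZeroRingHom]
  · have hM : ∀ a b : ι, (X a * X b : MvPolynomial ι k) ∈
        homogeneousSubmodule ι k (1 • (1 + 1)) := fun a b =>
      SetLike.mul_mem_graded (seg_X_mem a) (seg_X_mem b)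
    let m : ι → ι → Away (homogeneousSubmodule ι k) (X i * X j) := fun a b =>
      Away.mk (homogeneousSubmodule ι k) hm 1 (X a * X b) (hM a b)
    have key : ∀ a b c d, m a b * m c d = m a d * m c b := by
      intro a b c d
      apply HomogeneousLocalization.val_injective
      rw [HomogeneousLocalization.val_mul, HomogeneousLocalization.val_mul]
      simp only [m, Away.val_mk, Localization.mk_mul]
      congr 1
      ring
    have key2 : ∀ a b c d, m a b * m c d = m a c * m b d := by
      intro a b c d
      apply HomogeneousLocalization.val_injective
      rw [HomogeneousLocalization.val_mul, HomogeneousLocalization.val_mul]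
      simp only [m, Away.val_mk, Localization.mk_mul]
      congr 1
      ring
    have hone : m i j = 1 := by
      apply HomogeneousLocalization.val_injective
      simp only [m, Away.val_mk, HomogeneousLocalization.val_one]
      simp [Localization.mk_self_mk]
    refine ⟨q (m i i), IsUnit.map q (IsUnit.of_mul_eq_one (m j j) ?_), fun a => ?_⟩
    · rw [key2, hone, one_mul]
    · rw [e1, e2]
      simp only [RingHom.comp_apply, segDel_X]
      rw [awayMap_mk, awayMap_mk, ← map_mul]
      congr 1
      have : m a i = m i i * m a j := by
        rw [key, hone, one_mul]
      simpa [m] using this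

end SegPoly


/-! ## The Segre embedding -/

theorem segGam_bij {R : Type u} [CommRing R] {T : Scheme.{u}} (φ : T ⟶ Spec (CommRingCat.of R))
    [IsIso φ] : Function.Bijective (segGam φ) := by
  have : segGam φ = ((Scheme.ΓSpecIso (CommRingCat.of R)).inv ≫ φ.appTop).hom := rfl
  rw [this]
  have : IsIso φ.appTop := inferInstanceAs (IsIso (φ.app ⊤))
  have : IsIso ((Scheme.ΓSpecIso (CommRingCat.of R)).inv ≫ φ.appTop) := IsIso.comp_isIso
  exact ConcreteCategory.bijective_of_isIso ((Scheme.ΓSpecIso (CommRingCat.of R)).inv ≫ φ.appTop)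

theorem seg_pullback_gen {R S S' : Type u} [CommRing R] [CommRing S] [CommRing S']
    (a : R →+* S) (b : R →+* S')
    {ga : Spec (CommRingCat.of S) ⟶ Spec (CommRingCat.of R)}
    {gb : Spec (CommRingCat.of S') ⟶ Spec (CommRingCat.of R)}
    (hga : ga = Spec.map (CommRingCat.ofHom a)) (hgb : gb = Spec.map (CommRingCat.ofHom b))
    (Q : Subring Γ(pullback ga gb, ⊤))
    (h1 : ∀ s, segGam (pullback.fst ga gb) s ∈ Q)
    (h2 : ∀ s, segGam (pullback.snd ga gb) s ∈ Q) (x : Γ(pullback ga gb, ⊤)) : x ∈ Q := by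
  subst hga hgb
  let := a.toAlgebra
  let := b.toAlgebra
  obtain ⟨y, rfl⟩ := (segGam_bij (pullbackSpecIso R S S').hom).2 x
  induction y using TensorProduct.induction_on with
  | zero => rw [map_zero]; exact Q.zero_mem
  | add y z hy hz => rw [map_add]; exact Q.add_mem hy hz
  | tmul s t =>
    have e1 : segGam (pullback.fst (Spec.map (CommRingCat.ofHom a))
      (Spec.map (CommRingCat.ofHom b))) s =
        segGam (pullbackSpecIso R S S').hom (s ⊗ₜ[R] 1) := by
      have := segGam_Spec (pullbackSpecIso R S S').hom Algebra.TensorProduct.includeLeftRingHom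
      rw [pullbackSpecIso_hom_fst] at this
      exact congrArg (fun f => f s) this
    have e2 : segGam (pullback.snd (Spec.map (CommRingCat.ofHom a))
      (Spec.map (CommRingCat.ofHom b))) t =
        segGam (pullbackSpecIso R S S').hom (1 ⊗ₜ[R] t) := by
      have := segGam_Spec (pullbackSpecIso R S S').hom
        ((Algebra.TensorProduct.includeRight : S' →ₐ[R] TensorProduct R S S') :
          S' →+* TensorProduct R S S')
      rw [show (pullbackSpecIso R S S').hom ≫ Spec.map (CommRingCat.ofHom
        ((Algebra.TensorProduct.includeRight : S' →ₐ[R] TensorProduct R S S') :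
          S' →+* TensorProduct R S S')) = pullback.snd _ _ from pullbackSpecIso_hom_snd R S S'] at this
      exact congrArg (fun f => f t) this
    have e3 : s ⊗ₜ[R] t = (s ⊗ₜ[R] (1 : S')) * ((1 : S) ⊗ₜ[R] t) := by simp
    rw [e3, map_mul, ← e1, ← e2]
    exact Q.mul_mem (h1 s) (h2 t)

section SegSegre

open HomogeneousLocalization MvPolynomial

attribute [local instance] MvPolynomial.gradedAlgebra

/-- projective space -/
abbrev segPS (ι : Type) (k : Type u) [Field k] : Scheme.{u} := Proj (homogeneousSubmodule ι k)

/-- its structure morphism -/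
def segStr (ι : Type) (k : Type u) [Field k] : segPS ι k ⟶ Spec (CommRingCat.of k) :=
  Proj.toSpecZero (homogeneousSubmodule ι k) ≫
    Spec.map (CommRingCat.ofHom (algebraMap k (homogeneousSubmodule ι k 0)))

/-- chart rings -/
abbrev SegRing {ι : Type} (k : Type u) [Field k] (i : ι) : Type u :=
  Away (homogeneousSubmodule ι k) (X i)

/-- charts -/
def segCh {ι : Type} (k : Type u) [Field k] (i : ι) :
    Spec (CommRingCat.of (SegRing k i)) ⟶ segPS ι k :=
  Proj.awayι (homogeneousSubmodule ι k) (X i) (seg_X_mem i) Nat.one_pos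

instance {ι : Type} (k : Type u) [Field k] (i : ι) : IsOpenImmersion (segCh k i) := by
  unfold segCh; infer_instance

/-- standard opens -/
def segD {ι : Type} (k : Type u) [Field k] (i : ι) : (segPS ι k).Opens :=
  Proj.basicOpen (homogeneousSubmodule ι k) (X i)

theorem segCh_range {ι : Type} (k : Type u) [Field k] (i : ι) :
    (segCh k i).opensRange = segD k i :=
  Proj.opensRange_awayι _ _ _ _

theorem segD_cover (ι : Type) (k : Type u) [Field k] : ⨆ i : ι, segD k i = ⊤ := by
  refine Proj.iSup_basicOpen_eq_top' (homogeneousSubmodule ι k) _ (fun i => ⟨1, seg_X_mem i⟩) ?_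
  rw [eq_top_iff]
  rintro p -
  induction p using MvPolynomial.induction_on with
  | C c =>
    exact (Algebra.adjoin (homogeneousSubmodule ι k 0)
      (Set.range fun i : ι => (X i : MvPolynomial ι k))).algebraMap_mem
      (⟨C c, isHomogeneous_C ι c⟩ : homogeneousSubmodule ι k 0)
  | add p q hp hq => exact add_mem hp hq
  | mul_X p i hp => exact mul_mem hp (Algebra.subset_adjoin ⟨i, rfl⟩)

theorem segCh_str {ι : Type} (k : Type u) [Field k] (i : ι) :
    segCh k i ≫ segStr ι k = Spec.map (CommRingCat.ofHom (segKAway k (X i))) := by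
  unfold segCh segStr
  rw [Proj.awayι_toSpecZero_assoc, ← Spec.map_comp]
  rfl

/-- the cover by standard charts -/
def segCover (ι : Type) (k : Type u) [Field k] : (segPS ι k).OpenCover where
  I₀ := ι
  X i := Spec (CommRingCat.of (SegRing k i))
  f i := segCh k i
  mem₀ := by
    rw [Scheme.presieve₀_mem_precoverage_iff]
    refine ⟨fun x => ?_, inferInstance⟩
    have : x ∈ ⨆ i : ι, segD k i := by rw [segD_cover]; trivial
    obtain ⟨i, hi⟩ := TopologicalSpace.Opens.mem_iSup.1 this
    rw [← segCh_range] at hi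
    exact ⟨i, hi⟩

variable {ι κ τ : Type} {k : Type u} [Field k] (ε : τ ≃ ι × κ)

/-- products of coordinates -/
def segSeg {R : Type u} [CommRing R] (f : MvPolynomial ι k →+* R) (g : MvPolynomial κ k →+* R) :
    MvPolynomial τ k →+* R :=
  eval₂Hom (f.comp C) fun l => f (X (ε l).1) * g (X (ε l).2)

theorem segSeg_comp {R S : Type u} [CommRing R] [CommRing S] (h : R →+* S)
    (f : MvPolynomial ι k →+* R) (g : MvPolynomial κ k →+* R) :
    h.comp (segSeg ε f g) = segSeg ε (h.comp f) (h.comp g) := by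
  apply MvPolynomial.ringHom_ext <;> intro <;> simp [segSeg]

theorem segSeg_unit {T : Scheme.{u}} {i : ι} {j : κ}
    (φ : T ⟶ Spec (CommRingCat.of (SegRing k i))) (ψ : T ⟶ Spec (CommRingCat.of (SegRing k j))) :
    IsUnit (segSeg ε (segPt i φ) (segPt j ψ) (X (ε.symm (i, j)))) := by
  simp [segSeg, segPt_X_self]

/-- the Segre map locally -/
def segSig {T : Scheme.{u}} {i : ι} {j : κ} (φ : T ⟶ Spec (CommRingCat.of (SegRing k i)))
    (ψ : T ⟶ Spec (CommRingCat.of (SegRing k j))) : T ⟶ segPS τ k :=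
  segToP (homogeneousSubmodule τ k) T (segSeg ε (segPt i φ) (segPt j ψ)) (X (ε.symm (i, j)))
    (segSeg_unit ε φ ψ) (seg_X_mem _) Nat.one_pos

theorem segSig_comp {T T' : Scheme.{u}} {i : ι} {j : κ} (g : T' ⟶ T)
    (φ : T ⟶ Spec (CommRingCat.of (SegRing k i)))
    (ψ : T ⟶ Spec (CommRingCat.of (SegRing k j))) :
    g ≫ segSig ε φ ψ = segSig ε (g ≫ φ) (g ≫ ψ) := by
  unfold segSig
  refine (segToP_comp _ _ _ _ _ _ _ _ _).trans ?_
  congr 1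
  rw [segSeg_comp, segPt_comp, segPt_comp]

theorem segSig_str {T : Scheme.{u}} {i : ι} {j : κ}
    (φ : T ⟶ Spec (CommRingCat.of (SegRing k i)))
    (ψ : T ⟶ Spec (CommRingCat.of (SegRing k j))) :
    segSig ε φ ψ ≫ segStr τ k = φ ≫ segCh k i ≫ segStr ι k := by
  unfold segSig
  rw [segCh_str, segStr, ← Category.assoc]
  refine (congrArg (· ≫ _) (segToP_toSpecZero _ _ _ _ _ _ _)).trans ?_
  rw [← segGam_toSpec (φ ≫ _), segGam_Spec]
  simp only [Category.assoc]
  rw [← Spec.map_comp]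
  congr 2
  refine CommRingCat.hom_ext (RingHom.ext fun c => ?_)
  change segSeg ε (segPt i φ) (segPt j ψ) (C c) = segGam φ (segKAway k (X i) c)
  simp only [segSeg, coe_eval₂Hom, eval₂_C]
  exact segPt_C i φ c

theorem segSig_preimage {T : Scheme.{u}} {i : ι} {j : κ}
    (φ : T ⟶ Spec (CommRingCat.of (SegRing k i)))
    (ψ : T ⟶ Spec (CommRingCat.of (SegRing k j))) (l : τ) :
    segSig ε φ ψ ⁻¹ᵁ segD k l =
      (φ ≫ segCh k i) ⁻¹ᵁ segD k (ε l).1 ⊓ (ψ ≫ segCh k j) ⁻¹ᵁ segD k (ε l).2 := by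
  unfold segSig segD
  refine (segToP_preimage _ _ _ _ _ _ _ _ (seg_X_mem l) Nat.one_pos).trans ?_
  have e1 := segToP_preimage _ _ (segPt i φ) _ (segPt_unit i φ) (seg_X_mem i) Nat.one_pos
    (X (ε l).1) (seg_X_mem _) Nat.one_pos
  have e2 := segToP_preimage _ _ (segPt j ψ) _ (segPt_unit j ψ) (seg_X_mem j) Nat.one_pos
    (X (ε l).2) (seg_X_mem _) Nat.one_pos
  rw [← segPt_awayι] at e1 e2
  unfold segCh
  refine Eq.trans ?_ (congrArg₂ _ e1.symm e2.symm)
  rw [← Scheme.basicOpen_mul]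
  simp [segSeg]

theorem segSig_compat {T : Scheme.{u}} {i i' : ι} {j j' : κ}
    (φ : T ⟶ Spec (CommRingCat.of (SegRing k i)))
    (ψ : T ⟶ Spec (CommRingCat.of (SegRing k j)))
    (φ' : T ⟶ Spec (CommRingCat.of (SegRing k i')))
    (ψ' : T ⟶ Spec (CommRingCat.of (SegRing k j')))
    (h1 : φ ≫ segCh k i = φ' ≫ segCh k i') (h2 : ψ ≫ segCh k j = ψ' ≫ segCh k j') :
    segSig ε φ ψ = segSig ε φ' ψ' := by
  obtain ⟨hC, v, hv, hX⟩ := segPt_change i i' φ φ' h1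
  obtain ⟨hC', w, hw, hX'⟩ := segPt_change j j' ψ ψ' h2
  have hsX : ∀ a, segSeg ε (segPt i' φ') (segPt j' ψ') (X a) =
      (v * w) * segSeg ε (segPt i φ) (segPt j ψ) (X a) := by
    intro a
    simp only [segSeg, coe_eval₂Hom, eval₂_X, hX, hX']
    ring
  have hu : IsUnit (segSeg ε (segPt i' φ') (segPt j' ψ') (X (ε.symm (i, j)))) := by
    rw [hsX]
    exact (hv.mul hw).mul (segSeg_unit ε φ ψ)
  unfold segSig
  refine (segToP_scale (homogeneousSubmodule τ k) T _ (segSeg ε (segPt i' φ') (segPt j' ψ'))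
    (v * w) (seg_hom_scale _ _ _ (fun c => ?_) hsX) _ _ hu _ _).trans
    (segToP_indep _ _ _ _ _ _ _ _ _ _ _)
  simp [segSeg, hC]

end SegSegre


theorem seg_ci_comp {X Y Z : Scheme.{u}} (f : X ⟶ Y) (g : Y ⟶ Z) (hf : IsClosedImmersion f)
    (hg : IsClosedImmersion g) : IsClosedImmersion (f ≫ g) := inferInstance

section SegSegre2

open HomogeneousLocalization MvPolynomial

attribute [local instance] MvPolynomial.gradedAlgebra

variable {ι κ τ : Type} (k : Type u) [Field k] (ε : τ ≃ ι × κ)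

/-- the chart of the product -/
abbrev segT (i : ι) (j : κ) : Scheme.{u} :=
  pullback (segCh k i ≫ segStr ι k) (segCh k j ≫ segStr κ k)

/-- inclusion of the chart of the product -/
def segM (i : ι) (j : κ) : segT k i j ⟶ pullback (segStr ι k) (segStr κ k) :=
  pullback.map _ _ _ _ (segCh k i) (segCh k j) (𝟙 _) (Category.comp_id _) (Category.comp_id _)

theorem segM_fst (i : ι) (j : κ) :
    segM k i j ≫ pullback.fst _ _ = pullback.fst _ _ ≫ segCh k i :=
  pullback.lift_fst _ _ _

theorem segM_snd (i : ι) (j : κ) :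
    segM k i j ≫ pullback.snd _ _ = pullback.snd _ _ ≫ segCh k j :=
  pullback.lift_snd _ _ _

/-- the cover of the product -/
def segCov2 (ι κ : Type) : (pullback (segStr ι k) (segStr κ k)).OpenCover :=
  Scheme.Pullback.openCoverOfLeftRight (segCover ι k) (segCover κ k) _ _

instance (i : ι) (j : κ) : IsOpenImmersion (segM k i j) :=
  (segCov2 k ι κ).map_prop (i, j)

theorem segM_jointly (x : ↥(pullback (segStr ι k) (segStr κ k))) :
    ∃ (i : ι) (j : κ) (y : segT k i j), segM k i j y = x := by
  obtain ⟨i, y, hy⟩ := (segCov2 k ι κ).exists_eq x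
  exact ⟨i.1, i.2, y, hy⟩

theorem segM_opensRange (i : ι) (j : κ) : (segM k i j).opensRange =
    (pullback.fst (segStr ι k) (segStr κ k)) ⁻¹ᵁ segD k i ⊓
      (pullback.snd (segStr ι k) (segStr κ k)) ⁻¹ᵁ segD k j := by
  rw [← segCh_range, ← segCh_range]
  ext1
  exact Scheme.Pullback.range_map _ _ _ _ (segCh k i) (segCh k j) (𝟙 _) (Category.comp_id _)
    (Category.comp_id _)

theorem segM_compat (i i' : ι) (j j' : κ) :
    pullback.fst (segM k i j) (segM k i' j') ≫ segSig ε
      (pullback.fst (segCh k i ≫ segStr ι k) (segCh k j ≫ segStr κ k))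
      (pullback.snd (segCh k i ≫ segStr ι k) (segCh k j ≫ segStr κ k)) =
    pullback.snd (segM k i j) (segM k i' j') ≫ segSig ε
      (pullback.fst (segCh k i' ≫ segStr ι k) (segCh k j' ≫ segStr κ k))
      (pullback.snd (segCh k i' ≫ segStr ι k) (segCh k j' ≫ segStr κ k)) := by
  rw [segSig_comp, segSig_comp]
  apply segSig_compat
  · simp only [Category.assoc, ← segM_fst]
    rw [pullback.condition_assoc]
  · simp only [Category.assoc, ← segM_snd]
    rw [pullback.condition_assoc]

/-- the Segre map -/
def segS : pullback (segStr ι k) (segStr κ k) ⟶ segPS τ k :=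
  (segCov2 k ι κ).glueMorphisms (fun ij => segSig ε (i := ij.1) (j := ij.2)
    (pullback.fst (segCh k ij.1 ≫ segStr ι k) (segCh k ij.2 ≫ segStr κ k))
    (pullback.snd (segCh k ij.1 ≫ segStr ι k) (segCh k ij.2 ≫ segStr κ k))) (by
      rintro ⟨i, j⟩ ⟨i', j'⟩
      exact segM_compat k ε i i' j j')

theorem segM_S (i : ι) (j : κ) : segM k i j ≫ segS k ε =
    segSig ε (pullback.fst (segCh k i ≫ segStr ι k) (segCh k j ≫ segStr κ k))
      (pullback.snd (segCh k i ≫ segStr ι k) (segCh k j ≫ segStr κ k)) :=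
  Scheme.Cover.ι_glueMorphisms (segCov2 k ι κ) _ _ (i, j)

theorem segS_str : segS k ε ≫ segStr τ k = pullback.fst _ _ ≫ segStr ι k := by
  have this (i : ι) (j : κ) : segM k i j ≫ segS k ε ≫ segStr τ k =
      segM k i j ≫ pullback.fst _ _ ≫ segStr ι k := by
    rw [← Category.assoc, segM_S, segSig_str, ← Category.assoc, ← segM_fst, Category.assoc]
  apply Scheme.Cover.hom_ext (segCov2 k ι κ)
  rintro ⟨i, j⟩
  exact this i j

theorem segS_preimage (l : τ) : segS k ε ⁻¹ᵁ segD k l =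
    (pullback.fst (segStr ι k) (segStr κ k)) ⁻¹ᵁ segD k (ε l).1 ⊓
      (pullback.snd (segStr ι k) (segStr κ k)) ⁻¹ᵁ segD k (ε l).2 := by
  ext x
  obtain ⟨i, j, y, rfl⟩ := segM_jointly k x
  have h := segSig_preimage ε (pullback.fst (segCh k i ≫ segStr ι k) (segCh k j ≫ segStr κ k))
      (pullback.snd (segCh k i ≫ segStr ι k) (segCh k j ≫ segStr κ k)) l
  rw [← segM_S, ← segM_fst, ← segM_snd] at h
  simp only [Scheme.Hom.comp_preimage] at h
  exact congrArg (fun (W : (segT k i j).Opens) => y ∈ W) h |>.to_iff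

/-- the local Segre map -/
def segLoc (i : ι) (j : κ) : segT k i j ⟶ Spec (CommRingCat.of (SegRing k (ε.symm (i, j)))) :=
  (segT k i j).toSpecΓ ≫ Spec.map (CommRingCat.ofHom (segAwayHom (homogeneousSubmodule τ k) _ _
    (segSeg_unit ε (pullback.fst (segCh k i ≫ segStr ι k) (segCh k j ≫ segStr κ k))
      (pullback.snd (segCh k i ≫ segStr ι k) (segCh k j ≫ segStr κ k)))))

theorem segLoc_comm (i : ι) (j : κ) :
    segM k i j ≫ segS k ε = segLoc k ε i j ≫ segCh k (ε.symm (i, j)) := by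
  rw [segM_S]
  simp only [segLoc, Category.assoc]
  rfl

theorem segLoc_surj (i : ι) (j : κ) :
    Function.Surjective (segAwayHom (homogeneousSubmodule τ k) _ _
    (segSeg_unit ε (pullback.fst (segCh k i ≫ segStr ι k) (segCh k j ≫ segStr κ k))
      (pullback.snd (segCh k i ≫ segStr ι k) (segCh k j ≫ segStr κ k)))) := by
  rw [← RingHom.range_eq_top, eq_top_iff]
  rintro x -
  set p := (pullback.fst (segCh k i ≫ segStr ι k) (segCh k j ≫ segStr κ k))
  set q := (pullback.snd (segCh k i ≫ segStr ι k) (segCh k j ≫ segStr κ k))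
  set A := segAwayHom (homogeneousSubmodule τ k) _ _ (segSeg_unit ε p q) with hA
  have hone : segSeg ε (segPt i p) (segPt j q) (X (ε.symm (i, j))) = 1 := by
    simp [segSeg, segPt_X_self]
  have hmem : ∀ (n : ℕ) (y : MvPolynomial τ k), y ∈ homogeneousSubmodule τ k (n • 1) →
      segSeg ε (segPt i p) (segPt j q) y ∈ A.range := by
    intro n y hy
    have := segAwayHom_mk (homogeneousSubmodule τ k) _ _ (segSeg_unit ε p q) (seg_X_mem _) n y hy
    rw [hone, one_pow, mul_one] at this
    exact ⟨_, this⟩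
  have hC : ∀ c, segPt i p (C c) ∈ A.range := fun c => by
    have := hmem 0 (C c) (isHomogeneous_C τ c)
    simpa [segSeg] using this
  have hC2 : ∀ c, segPt j q (C c) = segPt i p (C c) := fun c => by
    rw [segPt_C, segPt_C]
    have hpq : p ≫ Spec.map (CommRingCat.ofHom (segKAway k (X i))) =
        q ≫ Spec.map (CommRingCat.ofHom (segKAway k (X j))) := by
      rw [← segCh_str, ← segCh_str]
      exact pullback.condition
    have h := (segGam_Spec p _).symm.trans ((congrArg segGam hpq).trans (segGam_Spec q _))
    exact (congrArg (fun f => f c) h).symm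
  refine seg_pullback_gen _ _ (segCh_str k i) (segCh_str k j) A.range ?_ ?_ x
  · intro s
    obtain ⟨y, rfl⟩ := segDel_surjective i s
    change segPt i p y ∈ _
    induction y using MvPolynomial.induction_on with
    | C c => exact hC c
    | add a b ha hb => rw [map_add]; exact add_mem ha hb
    | mul_X a l ha =>
      rw [map_mul]
      refine mul_mem ha ?_
      have := hmem 1 (X (ε.symm (l, j))) (seg_X_mem _)
      simpa [segSeg, segPt_X_self] using this
  · intro s
    obtain ⟨y, rfl⟩ := segDel_surjective j s
    change segPt j q y ∈ _
    induction y using MvPolynomial.induction_on with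
    | C c => rw [hC2]; exact hC c
    | add a b ha hb => rw [map_add]; exact add_mem ha hb
    | mul_X a l ha =>
      rw [map_mul]
      refine mul_mem ha ?_
      have := hmem 1 (X (ε.symm (i, l))) (seg_X_mem _)
      simpa [segSeg, segPt_X_self] using this

theorem segLoc_closed (i : ι) (j : κ) : IsClosedImmersion (segLoc k ε i j) := by
  have h := IsClosedImmersion.spec_of_surjective (CommRingCat.ofHom _) (segLoc_surj k ε i j)
  have hT : IsAffine (segT k i j) := inferInstance
  have : IsClosedImmersion (segT k i j).toSpecΓ := inferInstance
  unfold segLoc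
  exact seg_ci_comp _ _ this h

theorem segS_closed : IsClosedImmersion (segS k ε) := by
  apply IsZariskiLocalAtTarget.of_openCover (segCover τ k)
  intro l
  suffices h : ∀ l : τ, IsClosedImmersion (pullback.snd (segS k ε) (segCh k l)) from h l
  clear l
  intro l
  obtain ⟨⟨i, j⟩, rfl⟩ := ε.symm.surjective l
  have hp := IsOpenImmersion.isPullback (segLoc k ε i j) (segM k i j)
    (segCh k (ε.symm (i, j))) (segS k ε) (segLoc_comm k ε i j) (by
      rw [segCh_range, segS_preimage, segM_opensRange, Equiv.apply_symm_apply])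
  have h2 := segLoc_closed k ε i j
  have e := hp.flip.isoPullback_inv_snd
  rw [← e]
  infer_instance

end SegSegre2


/-! ## The projective line -/

section SegP1

open HomogeneousLocalization MvPolynomial

attribute [local instance] MvPolynomial.gradedAlgebra

variable (k : Type u) [Field k]

/-- dehomogenised polynomials as polynomials in one variable -/
def segF (j : Fin 2) : MvPolynomial (Fin 2) k →+* Polynomial k :=
  eval₂Hom Polynomial.C fun a => if a = j then 1 else Polynomial.X

/-- the other coordinate -/
def segH (j : Fin 2) : Polynomial k →+* SegRing k j :=
  Polynomial.eval₂RingHom (segKAway k (X j)) (segDel j (X (1 - j)))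

theorem segF_unit (j : Fin 2) : IsUnit (segF k j (X j)) := by simp [segF]

theorem segG_del (j : Fin 2) (p : MvPolynomial (Fin 2) k) :
    segAwayHom (homogeneousSubmodule (Fin 2) k) (segF k j) (X j) (segF_unit k j) (segDel j p) =
      segF k j p := by
  have hone : segF k j (X j) = 1 := by simp [segF]
  have : (segAwayHom (homogeneousSubmodule (Fin 2) k) (segF k j) (X j) (segF_unit k j)).comp
      (segDel j) = segF k j := by
    apply MvPolynomial.ringHom_ext
    · intro c
      rw [RingHom.comp_apply, segDel_homog j 0 (C c) (isHomogeneous_C _ c)]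
      have := segAwayHom_mk (homogeneousSubmodule (Fin 2) k) (segF k j) (X j) (segF_unit k j)
        (seg_X_mem j) 0 (C c) (isHomogeneous_C _ c)
      rwa [pow_zero, mul_one] at this
    · intro c
      rw [RingHom.comp_apply, segDel_homog j 1 (X c) (seg_X_mem c)]
      have := segAwayHom_mk (homogeneousSubmodule (Fin 2) k) (segF k j) (X j) (segF_unit k j)
        (seg_X_mem j) 1 (X c) (seg_X_mem c)
      rwa [hone, one_pow, mul_one] at this
  exact congrArg (fun f => f p) this

theorem segH_bij (j : Fin 2) : Function.Bijective (segH k j) := by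
  constructor
  · have : (segAwayHom (homogeneousSubmodule (Fin 2) k) (segF k j) (X j) (segF_unit k j)).comp
        (segH k j) = RingHom.id _ := by
      apply Polynomial.ringHom_ext
      · intro c
        simp only [segH, RingHom.comp_apply, Polynomial.coe_eval₂RingHom, Polynomial.eval₂_C]
        rw [← segDel_C, segG_del]
        simp [segF]
      · simp only [segH, RingHom.comp_apply, Polynomial.coe_eval₂RingHom, Polynomial.eval₂_X]
        rw [segG_del]
        fin_cases j <;> simp [segF]
    exact Function.LeftInverse.injective
      (g := segAwayHom (homogeneousSubmodule (Fin 2) k) (segF k j) (X j) (segF_unit k j))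
      fun x => congrArg (fun f => f x) this
  · intro s
    obtain ⟨p, rfl⟩ := segDel_surjective j s
    refine ⟨segF k j p, ?_⟩
    have : (segH k j).comp (segF k j) = segDel j := by
      apply MvPolynomial.ringHom_ext
      · intro c
        simp [segH, segF, segDel_C]
      · intro c
        by_cases hc : c = j
        · subst hc
          simp [segF, segDel_X_self]
        · have : c = 1 - j := by omega
          simp [segH, segF, this, show ¬ (1 - j = j) by omega]
    exact congrArg (fun f => f p) this

theorem segCh_line (j : Fin 2) : SegLine (segCh k j ≫ segStr (Fin 2) k) := by
  let e := RingEquiv.ofBijective _ (segH_bij k j)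
  refine ⟨Scheme.Spec.mapIso e.toCommRingCatIso.op, ?_⟩
  rw [segCh_str]
  change Spec.map (CommRingCat.ofHom (segH k j)) ≫ _ = _
  rw [← Spec.map_comp, ← CommRingCat.ofHom_comp]
  congr 2
  ext c
  simp [segH]

instance segStr_smooth : Smooth (segStr (Fin 2) k) := by
  have hl : IsZariskiLocalAtSource @Smooth.{u} := HasRingHomProperty.instIsZariskiLocalAtSource
  apply IsZariskiLocalAtSource.of_openCover (P := @Smooth.{u}) (segCover (Fin 2) k)
  intro j
  exact seg_line_smooth _ (segCh_line k j)

instance segStr_lft : LocallyOfFiniteType (segStr (Fin 2) k) := inferInstance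

instance segStr_sep (ι : Type) : IsSeparated (segStr ι k) := by
  unfold segStr
  infer_instance

instance segStr_qc : QuasiCompact (segStr (Fin 2) k) := by
  rw [quasiCompact_iff_compactSpace]
  have : Finite (segCover (Fin 2) k).I₀ := inferInstanceAs (Finite (Fin 2))
  have : ∀ i, CompactSpace ((segCover (Fin 2) k).X i) := fun i =>
    inferInstanceAs (CompactSpace (Spec (CommRingCat.of (SegRing k (show Fin 2 from i)))))
  exact Scheme.OpenCover.compactSpace (segCover (Fin 2) k)

/-- evaluation, for `k`-points -/
def segEv (c : Fin 2 → k) : MvPolynomial (Fin 2) k →+* Γ(Spec (CommRingCat.of k), ⊤) :=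
  (segGam (𝟙 (Spec (CommRingCat.of k)))).comp (eval c)

variable {k}

theorem segEv_unit (c : Fin 2 → k) (j : Fin 2) (hj : c j ≠ 0) : IsUnit (segEv k c (X j)) := by
  simp only [segEv, RingHom.comp_apply, eval_X]
  exact hj.isUnit.map _

/-- `k`-points of the projective line -/
def segKPt (c : Fin 2 → k) (j : Fin 2) (hj : c j ≠ 0) :
    Spec (CommRingCat.of k) ⟶ segPS (Fin 2) k :=
  segToP _ _ (segEv k c) (X j) (segEv_unit c j hj) (seg_X_mem j) Nat.one_pos

theorem segKPt_str (c : Fin 2 → k) (j : Fin 2) (hj : c j ≠ 0) :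
    segKPt c j hj ≫ segStr (Fin 2) k = 𝟙 _ := by
  unfold segKPt
  rw [segStr, ← Category.assoc, segToP_toSpecZero, Category.assoc, ← Spec.map_comp,
    ← CommRingCat.ofHom_comp]
  refine Eq.trans ?_ (segGam_toSpec (𝟙 _))
  congr 3
  ext a
  have h : (algebraMap (homogeneousSubmodule (Fin 2) k 0) (MvPolynomial (Fin 2) k))
      (algebraMap k (homogeneousSubmodule (Fin 2) k 0) a) = C a := rfl
  rw [RingHom.comp_apply, RingHom.comp_apply, h, segEv, RingHom.comp_apply, eval_C]

theorem segKPt_preimage (c : Fin 2 → k) (j : Fin 2) (hj : c j ≠ 0) (i : Fin 2) :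
    segKPt c j hj ⁻¹ᵁ segD k i =
      (Spec (CommRingCat.of k)).basicOpen (segGam (𝟙 (Spec (CommRingCat.of k))) (c i)) := by
  refine (segToP_preimage _ _ _ _ _ _ _ _ (seg_X_mem i) Nat.one_pos).trans ?_
  rw [segEv, RingHom.comp_apply, eval_X]

theorem segKPt_not_mem (c : Fin 2 → k) (j : Fin 2) (hj : c j ≠ 0) (i : Fin 2) (hi : c i = 0)
    (x : Spec (CommRingCat.of k)) : segKPt c j hj x ∉ segD k i := by
  intro h
  have h2 : x ∈ segKPt c j hj ⁻¹ᵁ segD k i := h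
  rw [segKPt_preimage, hi, map_zero, Scheme.basicOpen_zero] at h2
  exact h2

theorem segKPt_mem (c : Fin 2 → k) (j : Fin 2) (hj : c j ≠ 0) (i : Fin 2) (hi : c i ≠ 0)
    (x : Spec (CommRingCat.of k)) : segKPt c j hj x ∈ segD k i := by
  change x ∈ segKPt c j hj ⁻¹ᵁ segD k i
  rw [segKPt_preimage, Scheme.basicOpen_of_isUnit _ (hi.isUnit.map _)]
  trivial

/-- the point at infinity -/
def segInf (k : Type u) [Field k] : Spec (CommRingCat.of k) ⟶ segPS (Fin 2) k :=
  segKPt (fun i => if i = 0 then 0 else 1) 1 (by simp)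

theorem segInf_range : Set.range (segInf k) = (segD k (0 : Fin 2) : Set (segPS (Fin 2) k))ᶜ := by
  apply Set.Subset.antisymm
  · rintro _ ⟨x, rfl⟩
    exact segKPt_not_mem _ _ _ 0 (by simp) x
  · intro y hy
    have hy1 : y ∈ segD k (1 : Fin 2) := by
      have : y ∈ ⨆ i : Fin 2, segD k i := by rw [segD_cover]; trivial
      obtain ⟨i, hi⟩ := TopologicalSpace.Opens.mem_iSup.1 this
      fin_cases i
      · exact absurd hi hy
      · exact hi
    rw [← segCh_range] at hy1
    obtain ⟨z, rfl⟩ := hy1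
    have hz : z ∉ segCh k (1 : Fin 2) ⁻¹ᵁ segD k 0 := hy
    have hz2 : segDel (1 : Fin 2) (X 0) ∈ z.asIdeal := by
      by_contra hcon
      apply hz
      refine (Proj.awayι_preimage_basicOpen (homogeneousSubmodule (Fin 2) k)
        (seg_X_mem 1) Nat.one_pos (seg_X_mem 0) Nat.one_pos).symm ▸ ?_
      refine (PrimeSpectrum.mem_basicOpen _ _).2 ?_
      convert hcon using 2
      rw [segDel_X]
      simp [Away.isLocalizationElem]
    let c : Fin 2 → k := fun i => if i = 0 then 0 else 1
    let g := segAwayHom (homogeneousSubmodule (Fin 2) k) (segEv k c) (X 1)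
      (segEv_unit c 1 (by simp [c]))
    have hgd : ∀ p, g (segDel 1 p) = segEv k c p := by
      intro p
      have hone : segEv k c (X 1) = 1 := by simp [segEv, c]
      have : g.comp (segDel 1) = segEv k c := by
        apply MvPolynomial.ringHom_ext
        · intro a
          rw [RingHom.comp_apply, segDel_homog 1 0 (C a) (isHomogeneous_C _ a)]
          have := segAwayHom_mk (homogeneousSubmodule (Fin 2) k) (segEv k c) (X 1)
            (segEv_unit c 1 (by simp [c])) (seg_X_mem 1) 0 (C a) (isHomogeneous_C _ a)
          rwa [pow_zero, mul_one] at this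
        · intro a
          rw [RingHom.comp_apply, segDel_homog 1 1 (X a) (seg_X_mem a)]
          have := segAwayHom_mk (homogeneousSubmodule (Fin 2) k) (segEv k c) (X 1)
            (segEv_unit c 1 (by simp [c])) (seg_X_mem 1) 1 (X a) (seg_X_mem a)
          rwa [hone, one_pow, mul_one] at this
      exact congrArg (fun f => f p) this
    have hgam := segGam_bij (𝟙 (Spec (CommRingCat.of k)))
    have hg : Function.Surjective g := by
      intro s
      obtain ⟨a, rfl⟩ := hgam.2 s
      refine ⟨segDel 1 (C a), ?_⟩
      rw [hgd]
      simp [segEv]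
    have hker : z ∈ Set.range (PrimeSpectrum.comap g) := by
      rw [range_comap_of_surjective _ _ hg]
      intro s hs
      obtain ⟨p, rfl⟩ := segDel_surjective 1 s
      have hs2 : eval c p = 0 := by
        have : g (segDel 1 p) = 0 := hs
        rw [hgd] at this
        exact hgam.1 (this.trans (map_zero _).symm)
      have hq : (Ideal.Quotient.mk z.asIdeal).comp (segDel (1 : Fin 2)) =
          ((Ideal.Quotient.mk z.asIdeal).comp (segKAway k (X 1))).comp (eval c) := by
        apply MvPolynomial.ringHom_ext
        · intro a
          simp [segDel_C]
        · intro a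
          fin_cases a
          · simpa [c] using Ideal.Quotient.eq_zero_iff_mem.2 hz2
          · simp [c, segDel_X_self]
      have := congrArg (fun f => f p) hq
      simp only [RingHom.comp_apply, hs2, map_zero] at this
      exact Ideal.Quotient.eq_zero_iff_mem.1 this
    obtain ⟨w, hw⟩ := hker
    have hsurj : Function.Surjective (Spec (CommRingCat.of k)).toSpecΓ :=
      (Scheme.homeoOfIso (asIso (Spec (CommRingCat.of k)).toSpecΓ)).surjective
    obtain ⟨v, hv⟩ := hsurj w
    refine ⟨v, ?_⟩
    rw [← hw, ← hv]
    rfl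

end SegP1

/-! ## The product with the projective line -/

section SegProd

variable {k : Type u} [Field k] {X : Scheme.{u}} (x : X ⟶ Spec (CommRingCat.of k))

/-- the product of `X` with the projective line -/
abbrev segP : Scheme.{u} := pullback x (segStr (Fin 2) k)

theorem segP_proj (N : ℕ) (i : X ⟶ segPS (Fin (N + 1)) k) (hi : IsClosedImmersion i)
    (hs : i ≫ segStr (Fin (N + 1)) k = x) :
    ∃ (M : ℕ) (j : segP x ⟶ segPS (Fin (M + 1)) k), IsClosedImmersion j ∧
      j ≫ segStr (Fin (M + 1)) k = pullback.fst _ _ ≫ x := by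
  let ε : Fin ((2 * N + 1) + 1) ≃ Fin (N + 1) × Fin 2 :=
    (finCongr (by ring)).trans finProdFinEquiv.symm
  let m : segP x ⟶ pullback (segStr (Fin (N + 1)) k) (segStr (Fin 2) k) :=
    pullback.map x (segStr (Fin 2) k) _ _ i (𝟙 _) (𝟙 _)
      ((Category.comp_id _).trans hs.symm) ((Category.comp_id _).trans (Category.id_comp _).symm)
  have hm : IsClosedImmersion m := by
    have h1 : m ≫ pullback.snd _ _ = pullback.snd _ _ :=
      (pullback.lift_snd _ _ _).trans (Category.comp_id _)
    have hp : IsPullback m (pullback.fst x (segStr (Fin 2) k))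
        (pullback.fst (segStr (Fin (N + 1)) k) (segStr (Fin 2) k)) i := by
      refine IsPullback.of_right (h₁₂ := pullback.snd _ _) (v₁₃ := segStr (Fin 2) k)
        (h₂₂ := segStr (Fin (N + 1)) k) ?_ (pullback.lift_fst _ _ _)
        (IsPullback.of_hasPullback _ _).flip
      rw [h1, hs]
      exact (IsPullback.of_hasPullback _ _).flip
    exact MorphismProperty.of_isPullback (P := @IsClosedImmersion.{u}) hp.flip hi
  have hmf : m ≫ pullback.fst _ _ = pullback.fst _ _ ≫ i := pullback.lift_fst _ _ _
  refine ⟨2 * N + 1, m ≫ segS k ε, seg_ci_comp _ _ hm (segS_closed k ε), ?_⟩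
  rw [Category.assoc, segS_str, ← Category.assoc, hmf, Category.assoc, hs]

/-- the chart of the product -/
def segN (j : Fin 2) : pullback x (segCh k j ≫ segStr (Fin 2) k) ⟶ segP x :=
  pullback.map _ _ _ _ (𝟙 _) (segCh k j) (𝟙 _)
    ((Category.comp_id _).trans (Category.id_comp _).symm) (Category.comp_id _)

instance segN_open (j : Fin 2) : IsOpenImmersion (segN x j) := by
  unfold segN
  infer_instance

theorem segN_fst (j : Fin 2) : segN x j ≫ pullback.fst _ _ = pullback.fst _ _ :=
  (pullback.lift_fst _ _ _).trans (Category.comp_id _)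

theorem segN_range (j : Fin 2) :
    Set.range (segN x j) = pullback.snd x (segStr (Fin 2) k) ⁻¹' (segD k j) := by
  unfold segN
  rw [Scheme.Pullback.range_map]
  have : Set.range (segCh k j) = segD k j := congrArg (fun U : (segPS (Fin 2) k).Opens => (U : Set (segPS (Fin 2) k))) (segCh_range k j)
  rw [this]
  simp

theorem segN_cover (p : segP x) : ∃ j, p ∈ Set.range (segN x j) := by
  have h : pullback.snd x (segStr (Fin 2) k) p ∈ ⨆ i, segD k i := by
    rw [segD_cover]; trivial
  obtain ⟨i, hi⟩ := TopologicalSpace.Opens.mem_iSup.1 h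
  exact ⟨i, by rw [segN_range]; exact hi⟩

/-- the chart of the product, for an arbitrary affine line -/
theorem segP_chart {B : Scheme.{u}} (b : B ⟶ Spec (CommRingCat.of k)) (hb : SegLine b) :
    ∃ J : pullback x b ⟶ segP x, IsOpenImmersion J ∧ J ≫ pullback.fst _ _ = pullback.fst _ _ ∧
      Set.range J = pullback.snd x (segStr (Fin 2) k) ⁻¹' (segD k (0 : Fin 2)) := by
  obtain ⟨e, he⟩ := hb
  obtain ⟨e', he'⟩ := segCh_line k (0 : Fin 2)
  have hc : (e ≪≫ e'.symm).hom ≫ segCh k 0 ≫ segStr (Fin 2) k = b := by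
    rw [← he', Iso.trans_hom, Iso.symm_hom, Category.assoc, Iso.inv_hom_id_assoc, he]
  let m : pullback x b ⟶ pullback x (segCh k 0 ≫ segStr (Fin 2) k) :=
    pullback.map _ _ _ _ (𝟙 _) (e ≪≫ e'.symm).hom (𝟙 _)
      ((Category.comp_id _).trans (Category.id_comp _).symm) ((Category.comp_id _).trans hc.symm)
  have hm : IsIso m := by
    unfold m; infer_instance
  refine ⟨m ≫ segN x 0, inferInstance, ?_, ?_⟩
  · rw [Category.assoc, segN_fst]
    exact (pullback.lift_fst _ _ _).trans (Category.comp_id _)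
  · rw [← segN_range]
    ext p
    constructor
    · rintro ⟨q, rfl⟩
      exact ⟨m q, (Scheme.Hom.comp_apply _ _ _).symm⟩
    · rintro ⟨q, rfl⟩
      obtain ⟨q, rfl⟩ := (Scheme.homeoOfIso (asIso m)).surjective q
      exact ⟨q, (Scheme.Hom.comp_apply _ _ _)⟩

theorem segP_reduced {B : Scheme.{u}} (b : B ⟶ Spec (CommRingCat.of k)) (hb : SegLine b)
    (h : IsReduced (pullback x b)) : IsReduced (segP x) := by
  have (j : Fin 2) : IsReduced (pullback x (segCh k j ≫ segStr (Fin 2) k)) :=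
    seg_line_reduced b hb _ (segCh_line k j) x h
  have : ∀ i, IsReduced ((Scheme.Pullback.openCoverOfRight (segCover (Fin 2) k) x
    (segStr (Fin 2) k)).X i) := this
  exact IsReduced.of_openCover _ (Scheme.Pullback.openCoverOfRight (segCover (Fin 2) k) x
    (segStr (Fin 2) k))

theorem seg_irred_union {T : Type*} [TopologicalSpace T] {S S' : Set T} (hS : IsOpen S)
    (iS : IsIrreducible S) (iS' : IsIrreducible S') (hne : (S ∩ S').Nonempty)
    (hu : ∀ t, t ∈ S ∨ t ∈ S') : IrreducibleSpace T := by
  have h1 : S' ⊆ closure S := by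
    refine (subset_closure_inter_of_isPreirreducible_of_isOpen iS'.2 hS ?_).trans
      (closure_mono Set.inter_subset_right)
    rwa [Set.inter_comm]
  have h2 : closure S = Set.univ := by
    rw [Set.eq_univ_iff_forall]
    intro t
    rcases hu t with h | h
    · exact subset_closure h
    · exact h1 h
  have h3 := iS.closure
  rw [h2] at h3
  have : Nonempty T := ⟨hne.some⟩
  exact { isPreirreducible_univ := h3.2, toNonempty := this }

/-- the section of the product over a rational point of the projective line -/
def segSec (y : Spec (CommRingCat.of k) ⟶ segPS (Fin 2) k) (hy : y ≫ segStr (Fin 2) k = 𝟙 _) :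
    X ⟶ segP x :=
  pullback.lift (𝟙 X) (x ≫ y) (by
    rw [Category.id_comp, Category.assoc, hy, Category.comp_id])

theorem segSec_fst (y : Spec (CommRingCat.of k) ⟶ segPS (Fin 2) k)
    (hy : y ≫ segStr (Fin 2) k = 𝟙 _) : segSec x y hy ≫ pullback.fst _ _ = 𝟙 X :=
  pullback.lift_fst _ _ _

theorem segSec_snd (y : Spec (CommRingCat.of k) ⟶ segPS (Fin 2) k)
    (hy : y ≫ segStr (Fin 2) k = 𝟙 _) : segSec x y hy ≫ pullback.snd _ _ = x ≫ y :=
  pullback.lift_snd _ _ _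

theorem segP_irred [IrreducibleSpace X] : IrreducibleSpace (segP x) := by
  have hi (j : Fin 2) : IrreducibleSpace ↥(pullback x (segCh k j ≫ segStr (Fin 2) k)) :=
    seg_line_irred _ (segCh_line k j) x
  have hI (j : Fin 2) : IsIrreducible (Set.range (segN x j)) := by
    have := (IrreducibleSpace.isIrreducible_univ
      ↥(pullback x (segCh k j ≫ segStr (Fin 2) k))).image (segN x j)
      (segN x j).continuous.continuousOn
    rwa [Set.image_univ] at this
  refine seg_irred_union (segN x 0).isOpenEmbedding.isOpen_range (hI 0) (hI 1) ?_ ?_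
  · let p : X := Classical.arbitrary X
    let y := segKPt (k := k) (fun _ => 1) 0 (by simp)
    have hy : y ≫ segStr (Fin 2) k = 𝟙 _ := segKPt_str _ _ _
    have h (j : Fin 2) : segSec x y hy p ∈ Set.range (segN x j) := by
      rw [segN_range, Set.mem_preimage]
      change (pullback.snd x (segStr (Fin 2) k)) (segSec x y hy p) ∈ segD k j
      rw [← Scheme.Hom.comp_apply, segSec_snd, Scheme.Hom.comp_apply]
      exact segKPt_mem _ _ _ _ (by simp) _
    exact ⟨_, h 0, h 1⟩
  · intro t
    obtain ⟨j, hj⟩ := segN_cover x t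
    fin_cases j
    · exact Or.inl hj
    · exact Or.inr hj

theorem segP_dim [LocallyOfFiniteType x] :
    topologicalKrullDim (segP x) = topologicalKrullDim X + 1 := by
  have h (j : Fin 2) : topologicalKrullDim ↥(pullback x (segCh k j ≫ segStr (Fin 2) k)) =
    topologicalKrullDim X + 1 := seg_line_dim _ (segCh_line k j) x
  apply le_antisymm
  · exact seg_dim_le_of_cover _ (fun j => segN x j) (fun j => (segN x j).isOpenEmbedding)
      (segN_cover x) _ (fun j => (h j).le)
  · rw [← h 0]
    exact Topology.IsInducing.topologicalKrullDim_le (segN x 0).isOpenEmbedding.isInducing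

/-- the section at infinity -/
def segInfSec : X ⟶ segP x := segSec x (segInf k) (segKPt_str _ _ _)

theorem segInfSec_fst : segInfSec x ≫ pullback.fst _ _ = 𝟙 X := segSec_fst _ _ _

theorem segInfSec_closed : IsClosedImmersion (segInfSec x) := by
  have h : IsClosedImmersion (segInfSec x ≫ pullback.fst x (segStr (Fin 2) k)) := by
    rw [segInfSec_fst]; infer_instance
  exact IsClosedImmersion.of_comp (segInfSec x) (pullback.fst x (segStr (Fin 2) k))

theorem segInfSec_range :
    Set.range (segInfSec x) = (pullback.snd x (segStr (Fin 2) k) ⁻¹' (segD k (0 : Fin 2)))ᶜ := by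
  have hp : IsPullback (segInfSec x) x (pullback.snd x (segStr (Fin 2) k)) (segInf k) := by
    have h0 : IsPullback (segInfSec x ≫ pullback.fst x (segStr (Fin 2) k)) x x
        (segInf k ≫ segStr (Fin 2) k) := by
      rw [segInfSec_fst, show segInf k ≫ segStr (Fin 2) k = 𝟙 _ from segKPt_str _ _ _]
      exact IsPullback.of_horiz_isIso ⟨by simp⟩
    exact IsPullback.of_right h0 (segSec_snd _ _ _) (IsPullback.of_hasPullback _ _)
  have h1 : segInfSec x = hp.isoPullback.hom ≫ pullback.fst _ _ := hp.isoPullback_hom_fst.symm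
  have h2 := Scheme.Pullback.range_fst (pullback.snd x (segStr (Fin 2) k)) (segInf k)
  rw [segInf_range, Set.preimage_compl] at h2
  rw [← h2]
  ext p
  constructor
  · rintro ⟨q, rfl⟩
    rw [h1]
    exact ⟨hp.isoPullback.hom q, (Scheme.Hom.comp_apply _ _ _).symm⟩
  · rintro ⟨q, rfl⟩
    obtain ⟨q, rfl⟩ := (Scheme.homeoOfIso hp.isoPullback).surjective q
    exact ⟨q, (congrArg (fun f => f q) h1).trans (Scheme.Hom.comp_apply _ _ _)⟩

end SegProd

/-! ## Reduced closed subschemes -/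

theorem seg_reduced_closed {P : Scheme.{u}} (Z : Set P) (hZ : IsClosed Z) :
    ∃ (Y : Scheme.{u}) (i : Y ⟶ P), IsReduced Y ∧ IsClosedImmersion i ∧ Set.range i = Z := by
  let I := Scheme.IdealSheafData.vanishingIdeal (X := P) ⟨Z, hZ⟩
  refine ⟨I.subscheme, I.subschemeι, ?_, inferInstance, ?_⟩
  · have h (U : P.affineOpens) : IsReduced (Spec (CommRingCat.of (Γ(P, U) ⧸ I.ideal U))) := by
      have : _root_.IsReduced (Γ(P, U) ⧸ I.ideal U) := by
        rw [← Ideal.isRadical_iff_quotient_reduced]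
        exact PrimeSpectrum.isRadical_vanishingIdeal _
      have : _root_.IsReduced (CommRingCat.of (Γ(P, U) ⧸ I.ideal U)) := this
      infer_instance
    have : ∀ i, IsReduced (I.subschemeCover.openCover.X i) := h
    exact IsReduced.of_openCover _ I.subschemeCover.openCover
  · rw [Scheme.IdealSheafData.range_subschemeι]
    rfl

theorem seg_lift_closed {Y Z P : Scheme.{u}} [IsReduced Y] (f : Y ⟶ P) (i : Z ⟶ P)
    (hi : IsClosedImmersion i) (h : Set.range f ⊆ Set.range i) : ∃ g : Y ⟶ Z, g ≫ i = f := by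
  have : Surjective (pullback.fst f i) := by
    refine ⟨fun y => ?_⟩
    have : y ∈ Set.range (pullback.fst f i) := by
      rw [Scheme.Pullback.range_fst]
      exact h ⟨y, rfl⟩
    exact this
  have : IsIso (pullback.fst f i) := isIso_of_isClosedImmersion_of_surjective _
  refine ⟨inv (pullback.fst f i) ≫ pullback.snd f i, ?_⟩
  rw [Category.assoc, ← pullback.condition, IsIso.inv_hom_id_assoc]

/-- If `σ : X → P` is closed, `J : T → P` is open with complementary ranges, `z : Z → T` is
closed with complement `U` and `i : Y → P` is closed with range the complement of `J(U)`,
all reduced, then `Y` is decomposed into `X` and `Z`. -/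
theorem seg_decomp {P X T Z Y : Scheme.{u}} [IsReduced X] [IsReduced Z] [IsReduced Y]
    (σ : X ⟶ P) (hσ : IsClosedImmersion σ) (J : T ⟶ P) (hJ : IsOpenImmersion J)
    (hc : Set.range σ = (Set.range J)ᶜ) (z : Z ⟶ T) (hz : IsClosedImmersion z)
    (i : Y ⟶ P) (hi : IsClosedImmersion i)
    (hr : Set.range i = (J '' (Set.range z)ᶜ)ᶜ) :
    ∃ (a : X ⟶ Y) (b : Z ⟶ Y), IsClosedImmersion a ∧ IsOpenImmersion b ∧ a ≫ i = σ ∧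
      b ≫ i = z ≫ J ∧ Set.range b = (Set.range a)ᶜ := by
  have hJi : Function.Injective J := J.isOpenEmbedding.injective
  obtain ⟨a, ha⟩ := seg_lift_closed σ i hi (by
    rw [hc, hr, Set.compl_subset_compl]
    exact Set.image_subset_range _ _)
  obtain ⟨b, hb⟩ := seg_lift_closed (z ≫ J) i hi (by
    rw [hr]
    rintro _ ⟨p, rfl⟩ ⟨t, ht, htp⟩
    rw [Scheme.Hom.comp_apply] at htp
    exact ht ⟨p, (hJi htp).symm⟩)
  have hac : IsClosedImmersion a := by
    have : IsClosedImmersion (a ≫ i) := ha ▸ hσ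
    exact IsClosedImmersion.of_comp a i
  -- the open part
  let c : Z ⟶ pullback i J := pullback.lift b z hb
  have hcs : c ≫ pullback.snd i J = z := pullback.lift_snd _ _ _
  have hcf : c ≫ pullback.fst i J = b := pullback.lift_fst _ _ _
  have hcc : IsClosedImmersion c := by
    have : IsClosedImmersion (c ≫ pullback.snd i J) := hcs ▸ hz
    exact IsClosedImmersion.of_comp c (pullback.snd i J)
  have hred : IsReduced (pullback i J) := isReduced_of_isOpenImmersion (pullback.fst i J)
  have hsj : Surjective c := by
    refine ⟨fun p => ?_⟩
    have hp : J (pullback.snd i J p) ∈ (J '' (Set.range z)ᶜ)ᶜ := by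
      rw [← hr, ← Scheme.Hom.comp_apply, ← pullback.condition, Scheme.Hom.comp_apply]
      exact ⟨_, rfl⟩
    have hq : pullback.snd i J p ∈ Set.range z := by
      by_contra hq
      exact hp ⟨_, hq, rfl⟩
    obtain ⟨q, hq⟩ := hq
    refine ⟨q, ?_⟩
    apply (pullback.snd i J).isClosedEmbedding.injective
    rw [← Scheme.Hom.comp_apply, hcs, hq]
  have hiso : IsIso c := isIso_of_isClosedImmersion_of_surjective _
  have hbo : IsOpenImmersion b := by
    rw [← hcf]
    infer_instance
  refine ⟨a, b, hac, hbo, ha, hb, ?_⟩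
  have hii : Function.Injective i := i.isClosedEmbedding.injective
  ext y
  have h1 : y ∈ Set.range a ↔ i y ∈ Set.range σ := by
    constructor
    · rintro ⟨p, rfl⟩
      exact ⟨p, by rw [← Scheme.Hom.comp_apply, ha]⟩
    · rintro ⟨p, hp⟩
      refine ⟨p, hii ?_⟩
      rw [← Scheme.Hom.comp_apply, ha, hp]
  have h2 : y ∈ Set.range b ↔ i y ∈ Set.range J := by
    constructor
    · rintro ⟨p, rfl⟩
      exact ⟨z p, by rw [← Scheme.Hom.comp_apply, ← Scheme.Hom.comp_apply, hb]⟩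
    · rintro ⟨t, ht⟩
      have hy : i y ∈ (J '' (Set.range z)ᶜ)ᶜ := by
        rw [← hr]; exact ⟨y, rfl⟩
      have hq : t ∈ Set.range z := by
        by_contra hq
        exact hy ⟨_, hq, ht⟩
      obtain ⟨q, rfl⟩ := hq
      refine ⟨q, hii ?_⟩
      rw [← Scheme.Hom.comp_apply, hb, Scheme.Hom.comp_apply, ht]
  rw [Set.mem_compl_iff, h1, h2, hc, Set.mem_compl_iff, not_not]

theorem seg_cls_eq {k : Type u} [Field k] {Q : Variety k → Prop} (Y X Z : Variety k) (hY : Q Y)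
    (hX : Q X) (hZ : Q Z) (a : X.toScheme ⟶ Y.toScheme) (b : Z.toScheme ⟶ Y.toScheme)
    (ha : IsClosedImmersion a) (hb : IsOpenImmersion b) (has : a ≫ Y.str = X.str)
    (hbs : b ≫ Y.str = Z.str) (hr : Set.range b = (Set.range a)ᶜ) :
    K0.cls Y hY = K0.cls X hX + K0.cls Z hZ := by
  have h : (QuotientAddGroup.mk (FreeAbelianGroup.of ⟨Y, hY⟩ - FreeAbelianGroup.of ⟨X, hX⟩ -
      FreeAbelianGroup.of ⟨Z, hZ⟩) : K0 k Q) = 0 := by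
    refine (QuotientAddGroup.eq_zero_iff _).2 (AddSubgroup.subset_closure (Or.inr ?_))
    exact ⟨⟨Y, hY⟩, ⟨X, hX⟩, ⟨Z, hZ⟩, a, b, ha, hb, has, hbs, hr, rfl⟩
  have h' : K0.cls Y hY - K0.cls X hX - K0.cls Z hZ = 0 := h
  rw [sub_sub, sub_eq_zero] at h'
  exact h'

/-- The smooth projective completion of one side. -/
theorem seg_side {k : Type u} [Field k] (n : ℕ) (hn : 1 ≤ n) (X : Variety k)
    (hXs : IsSmoothVar X) (hXp : IsProjectiveVar X) (hXi : IrreducibleSpace X.toScheme)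
    (hXd : X.dim = ((n - 1 : ℕ) : WithBot ℕ∞))
    (A XA : Variety k) (hA : IsAffLine A) (hXA : IsProductOf XA X A)
    (U : XA.toScheme.Opens) (hU : Dense (U : Set XA.toScheme))
    (ZU : Variety k) (hZU : IsComplementOf ZU XA U)
    (hZUd : ZU.dim ≤ ((n - 1 : ℕ) : WithBot ℕ∞)) :
    ∃ (P : Variety k) (W : P.toScheme.Opens) (Z : Variety k)
      (hZ : Z.dim ≤ ((n - 1 : ℕ) : WithBot ℕ∞)) (e : U.toScheme ≅ W.toScheme),
      IsSmoothVar P ∧ IsProjectiveVar P ∧ IrreducibleSpace P.toScheme ∧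
      P.dim = (n : WithBot ℕ∞) ∧ Dense (W : Set P.toScheme) ∧
      e.hom ≫ W.ι ≫ P.str = U.ι ≫ XA.str ∧ IsComplementOf Z P W ∧
      (K0.cls Z hZ : K0le k (n - 1)) = K0.cls X hXd.le + K0.cls ZU hZUd := by
  obtain ⟨e0, he0⟩ := hXA
  have hlX := X.locallyOfFiniteType
  have hqX := X.quasiCompact
  have hsX := X.separated
  have hrX := X.reduced
  have hrZ := ZU.reduced
  have hredA : IsReduced (pullback X.str A.str) := by
    have := XA.reduced
    exact isReduced_of_isOpenImmersion e0.inv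
  have hPirr : IrreducibleSpace (segP X.str) := segP_irred X.str
  obtain ⟨J0, hJ0, hJf, hJr⟩ := segP_chart X.str A.str hA
  let P : Variety k :=
    { toScheme := segP X.str
      str := pullback.fst _ _ ≫ X.str
      reduced := segP_reduced X.str A.str hA hredA
      separated := inferInstance
      locallyOfFiniteType := inferInstance
      quasiCompact := inferInstance }
  have hPi : IrreducibleSpace P.toScheme := hPirr
  have hPd : P.dim = (n : WithBot ℕ∞) := by
    change topologicalKrullDim (segP X.str) = _
    rw [segP_dim, show topologicalKrullDim X.toScheme = _ from hXd]
    obtain ⟨m, rfl⟩ := Nat.exists_eq_add_of_le' hn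
    norm_cast
  let J : XA.toScheme ⟶ P.toScheme := e0.hom ≫ J0
  have hJ : IsOpenImmersion J := by
    unfold J
    exact inferInstanceAs (IsOpenImmersion (e0.hom ≫ J0))
  have hJs : J ≫ P.str = XA.str := by
    change (e0.hom ≫ J0) ≫ pullback.fst _ _ ≫ X.str = _
    rw [Category.assoc, ← Category.assoc J0, hJf, he0]
  have hJr' : Set.range J = pullback.snd X.str (segStr (Fin 2) k) ⁻¹' (segD k (0 : Fin 2)) := by
    rw [← hJr]
    ext p
    constructor
    · rintro ⟨q, rfl⟩
      exact ⟨e0.hom q, (Scheme.Hom.comp_apply _ _ _).symm⟩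
    · rintro ⟨q, rfl⟩
      obtain ⟨q, rfl⟩ := (Scheme.homeoOfIso e0).surjective q
      exact ⟨q, (Scheme.Hom.comp_apply _ _ _)⟩
  let W : P.toScheme.Opens := J ''ᵁ U
  have hXAne : Nonempty XA.toScheme := by
    have : IrreducibleSpace ↥(pullback X.str A.str) := seg_line_irred A.str hA X.str
    exact ⟨e0.inv (Classical.arbitrary _)⟩
  have hWne : (W : Set P.toScheme).Nonempty := by
    obtain ⟨u, hu⟩ := hU.nonempty
    exact ⟨J u, u, hu, rfl⟩
  obtain ⟨Y, i, hYr, hi, hir⟩ := seg_reduced_closed (P := P.toScheme) (W : Set P.toScheme)ᶜ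
    W.isOpen.isClosed_compl
  let Z : Variety k :=
    { toScheme := Y
      str := i ≫ P.str
      reduced := hYr
      separated := by have := P.separated; infer_instance
      locallyOfFiniteType := by have := P.locallyOfFiniteType; infer_instance
      quasiCompact := by have := P.quasiCompact; infer_instance }
  have hZ : Z.dim ≤ ((n - 1 : ℕ) : WithBot ℕ∞) := by
    have h := seg_dim_add_one_le i i.isClosedEmbedding (by
      rw [hir]
      intro h
      obtain ⟨w, hw⟩ := hWne
      exact (h ▸ Set.mem_univ w : w ∈ (W : Set P.toScheme)ᶜ) hw)
    rw [show topologicalKrullDim P.toScheme = _ from hPd] at h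
    obtain ⟨m, rfl⟩ := Nat.exists_eq_add_of_le' hn
    exact (seg_add_one_le_iff _ _).1 h
  obtain ⟨z, hz, hzs, hzr⟩ := hZU
  have hzr' : (U : Set XA.toScheme) = (Set.range z)ᶜ := by
    rw [show Set.range z = _ from hzr, compl_compl]
  obtain ⟨a, b, ha, hb, hai, hbi, hab⟩ := seg_decomp (P := P.toScheme) (Y := Y)
    (segInfSec X.str) (segInfSec_closed X.str) J hJ
    (by rw [segInfSec_range]; exact congrArg _ hJr'.symm) z hz i hi (by
      rw [hir, ← hzr']; rfl)
  refine ⟨P, W, Z, hZ, J.isoImage U, ?_, ?_, hPi, hPd, ?_, ?_, ⟨i, hi, rfl, hir⟩, ?_⟩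
  · change Smooth (pullback.fst X.str (segStr (Fin 2) k) ≫ X.str)
    have : Smooth X.str := hXs
    infer_instance
  · obtain ⟨N, i, hi, his⟩ := hXp
    obtain ⟨M, j, hj, hjs⟩ := segP_proj X.str N i hi his
    exact ⟨M, j, hj, hjs⟩
  · exact W.isOpen.dense hWne
  · rw [← Category.assoc, Scheme.Hom.isoImage_hom_ι, Category.assoc, hJs]
  · refine seg_cls_eq Z X ZU hZ _ hZUd a b ha hb ?_ ?_ hab
    · change a ≫ i ≫ P.str = _
      rw [← Category.assoc, hai]
      change segInfSec X.str ≫ pullback.fst _ _ ≫ X.str = _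
      rw [← Category.assoc, segInfSec_fst, Category.id_comp]
    · change b ≫ i ≫ P.str = _
      rw [← Category.assoc, hbi, Category.assoc, hJs, hzs]

theorem seg_neg_image {k : Type u} [Field k] (a b : ℕ) (x : K0le k b) (h : InMulLImage a b x) :
    InMulLImage a b (-x) := by
  obtain ⟨m, c, Z, W, hZ, hW, h1, rfl⟩ := h
  refine ⟨m, fun i => - c i, Z, W, hZ, hW, h1, ?_⟩
  simp only [neg_smul, Finset.sum_neg_distrib]


/-- Over a convenient field, for smooth projective irreducible
varieties `X, X'` of dimension `n - 1` and a birational isomorphism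
`φ : X × 𝔸¹ ⇢ X' × 𝔸¹` represented by `e : U ≅ V`, one has
`[(X' × 𝔸¹) ∖ V] - [(X × 𝔸¹) ∖ U] ≡ [X] - [X']` in `K_0(V_k^{(n-1)})` modulo the image
of `·L : K_0(V_k^{(n-2)}) → K_0(V_k^{(n-1)})`. -/
theorem class_of_complements_of_birational_after_times_A1 (k : Type u) [Field k]
    (hk : ConvenientField k) (n : ℕ) (hn : 1 ≤ n) (X X' : Variety k)
    (hXs : IsSmoothVar X) (hX's : IsSmoothVar X')
    (hXp : IsProjectiveVar X) (hX'p : IsProjectiveVar X')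
    (hXi : IrreducibleSpace X.toScheme) (hX'i : IrreducibleSpace X'.toScheme)
    (hXd : X.dim = ((n - 1 : ℕ) : WithBot ℕ∞))
    (hX'd : X'.dim = ((n - 1 : ℕ) : WithBot ℕ∞))
    -- `XA = X × 𝔸¹` and `XA' = X' × 𝔸¹`:
    (A XA XA' : Variety k) (hA : IsAffLine A)
    (hXA : IsProductOf XA X A) (hXA' : IsProductOf XA' X' A)
    -- `φ` is represented by the isomorphism `e : U ≅ V`:
    (U : XA.toScheme.Opens) (V : XA'.toScheme.Opens)
    (hU : Dense (U : Set XA.toScheme)) (hV : Dense (V : Set XA'.toScheme))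
    (e : U.toScheme ≅ V.toScheme) (he : e.hom ≫ V.ι ≫ XA'.str = U.ι ≫ XA.str)
    -- `ZU` realizes `(X × 𝔸¹) ∖ U` and `ZV` realizes `(X' × 𝔸¹) ∖ V`:
    (ZU ZV : Variety k) (hZU : IsComplementOf ZU XA U) (hZV : IsComplementOf ZV XA' V)
    (hZUd : ZU.dim ≤ ((n - 1 : ℕ) : WithBot ℕ∞))
    (hZVd : ZV.dim ≤ ((n - 1 : ℕ) : WithBot ℕ∞)) :
    InMulLImage (n - 2) (n - 1)
      ((K0le.cls (n - 1) ZV hZVd - K0le.cls (n - 1) ZU hZUd) -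
        (K0le.cls (n - 1) X hXd.le - K0le.cls (n - 1) X' hX'd.le)) := by
  obtain ⟨P, W, Z, hZ, f, hPs, hPp, hPi, hPd, hWd, hf, hZP, hcZ⟩ :=
    seg_side n hn X hXs hXp hXi hXd A XA hA hXA U hU ZU hZU hZUd
  obtain ⟨P', W', Z', hZ', f', hPs', hPp', hPi', hPd', hWd', hf', hZP', hcZ'⟩ :=
    seg_side n hn X' hX's hX'p hX'i hX'd A XA' hA hXA' V hV ZV hZV hZVd
  have hm := hk n P P' hPs hPs' hPp hPp' hPi hPi' hPd hPd' W W' hWd hWd'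
    (f.symm ≪≫ e ≪≫ f') (by
      simp only [Iso.trans_hom, Iso.symm_hom, Category.assoc]
      rw [hf', he, ← hf, Iso.inv_hom_id_assoc]) Z Z' hZ hZ' hZP hZP'
  have hm2 := seg_neg_image _ _ _ hm
  rw [hcZ, hcZ'] at hm2
  convert hm2 using 1
  unfold K0le.cls
  abel
end
end

section
/- Let k be a perfect field. Let K_0(V_k^{sm}) denote the free abelian group on isomorphism classes of smooth varieties over k, modulo the relations [X] = Σ_{i∈I} [X_i] for every smooth variety X and every finite family of locally closed embeddings {X_i → X}_{i∈I} with each X_i smooth, the images pairwise disjoint, and the union of the images equal to X. Then the natural homomorphism K_0(V_k^{sm}) → K_0[V_k], sending the class of a smooth variety to its class in the Grothendieck ring, is an isomorphism of abelian groups. -/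
open AlgebraicGeometry CategoryTheory CategoryTheory.Limits

noncomputable section

universe u

open Variety


namespace Variety

section Geometry

variable {k : Type u} [Field k]

attribute [instance] Variety.reduced Variety.separated Variety.locallyOfFiniteType
  Variety.quasiCompact

lemma isReduced_vanishingIdeal {S : Scheme.{u}} (C : TopologicalSpace.Closeds S) :
    IsReduced (Scheme.IdealSheafData.vanishingIdeal C).subscheme := by
  have key (i : S.affineOpens) : IsReduced
      ((Scheme.IdealSheafData.vanishingIdeal C).subschemeCover.openCover.X i) := by
    change IsReduced (Spec ((Scheme.IdealSheafData.vanishingIdeal C).subschemeCover.X i))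
    have : _root_.IsReduced ((Scheme.IdealSheafData.vanishingIdeal C).subschemeCover.X i) := by
      change _root_.IsReduced (_ ⧸ (Scheme.IdealSheafData.vanishingIdeal C).ideal i)
      rw [← Ideal.isRadical_iff_quotient_reduced]
      simp only [Scheme.IdealSheafData.vanishingIdeal_ideal]
      exact PrimeSpectrum.isRadical_vanishingIdeal _
    infer_instance
  have (i : (Scheme.IdealSheafData.vanishingIdeal C).subschemeCover.openCover.I₀) : IsReduced
      ((Scheme.IdealSheafData.vanishingIdeal C).subschemeCover.openCover.X i) := key i
  exact IsReduced.of_openCover _ (Scheme.IdealSheafData.vanishingIdeal C).subschemeCover.openCover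

/-- Reduced induced structure on a closed subset. -/
lemma exists_closed {S : Scheme.{u}} (s : S ⟶ Spec (CommRingCat.of k)) [IsSeparated s]
    [LocallyOfFiniteType s] [QuasiCompact s] (C : Set S) (hC : IsClosed C) :
    ∃ (Y : Variety k) (i : Y.toScheme ⟶ S), IsClosedImmersion i ∧ i ≫ s = Y.str ∧
      Set.range i.base = C := by
  let I := Scheme.IdealSheafData.vanishingIdeal (X := S) ⟨C, hC⟩
  have := isReduced_vanishingIdeal (S := S) ⟨C, hC⟩
  refine ⟨⟨I.subscheme, I.subschemeι ≫ s, this, inferInstance, inferInstance, inferInstance⟩,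
    I.subschemeι, inferInstance, rfl, ?_⟩
  rw [← show (I.support : Set S) = C by simp [I]]
  exact I.range_subschemeι

instance (X : Variety k) : IsLocallyNoetherian X.toScheme :=
  LocallyOfFiniteType.isLocallyNoetherian X.str

instance (X : Variety k) : CompactSpace X.toScheme :=
  QuasiCompact.compactSpace_of_compactSpace X.str

instance (X : Variety k) : IsNoetherian X.toScheme where

lemma exists_open (X : Variety k) (U : X.toScheme.Opens) :
    ∃ (Y : Variety k) (i : Y.toScheme ⟶ X.toScheme), IsOpenImmersion i ∧ i ≫ X.str = Y.str ∧
      Set.range i.base = U := by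
  refine ⟨⟨U.toScheme, U.ι ≫ X.str, inferInstance, inferInstance, inferInstance, inferInstance⟩,
    U.ι, inferInstance, rfl, ?_⟩
  exact U.range_ι

lemma exists_smooth_open [PerfectField k] (X : Variety k) [Nonempty X.toScheme] :
    ∃ (Y : Variety k) (i : Y.toScheme ⟶ X.toScheme), IsSmoothVar Y ∧
      IsOpenImmersion i ∧ i ≫ X.str = Y.str ∧ (Set.range i.base).Nonempty := by
  have : LocallyOfFinitePresentation X.str := inferInstance
  let U := X.str.smoothLocus
  refine ⟨⟨U.toScheme, U.ι ≫ X.str, inferInstance, inferInstance, inferInstance, inferInstance⟩,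
    U.ι, ?_, inferInstance, rfl, ?_⟩
  · change Smooth (U.ι ≫ X.str)
    rw [← Scheme.Hom.smoothLocus_eq_top_iff, ← Scheme.Hom.preimage_smoothLocus_eq]
    simp [U]
  · have := X.str.dense_smoothLocus_of_perfectField.nonempty
    rw [← U.range_ι] at this
    exact this

lemma isIso_of_immersion {X Y : Scheme.{u}} (f : X ⟶ Y) [IsImmersion f] [IsReduced Y]
    (h : Set.range f.base = Set.univ) : IsIso f := by
  have : IsClosedImmersion f := IsClosedImmersion.iff_isPreimmersion.mpr
    ⟨inferInstance, by
      have : Set.range f = Set.univ := h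
      rw [this]; exact isClosed_univ⟩
  have : Surjective f := ⟨Set.range_eq_univ.mp h⟩
  exact isIso_of_isClosedImmersion_of_surjective f

lemma exists_iso {X P Q : Variety k} (f : P.toScheme ⟶ X.toScheme) (g : Q.toScheme ⟶ X.toScheme)
    [IsImmersion f] [IsImmersion g] (hf : f ≫ X.str = P.str) (hg : g ≫ X.str = Q.str)
    (h : Set.range f.base = Set.range g.base) :
    ∃ e : P.toScheme ≅ Q.toScheme, e.hom ≫ Q.str = P.str := by
  have h' : Set.range f = Set.range g := h
  have h1 : IsIso (pullback.fst f g) := by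
    apply isIso_of_immersion
    refine (Scheme.Pullback.range_fst f g).trans ?_
    rw [← h']; ext; simp
  have h2 : IsIso (pullback.snd f g) := by
    apply isIso_of_immersion
    refine (Scheme.Pullback.range_snd f g).trans ?_
    rw [h']; ext; simp
  refine ⟨(asIso (pullback.fst f g)).symm ≪≫ asIso (pullback.snd f g), ?_⟩
  simp only [Iso.trans_hom, Iso.symm_hom, asIso_inv, asIso_hom, Category.assoc,
    IsIso.inv_comp_eq]
  rw [← hf, ← hg, pullback.condition_assoc]

lemma exists_inter {X P Q : Variety k} (f : P.toScheme ⟶ X.toScheme)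
    (g : Q.toScheme ⟶ X.toScheme)
    [IsImmersion f] [IsImmersion g] (hf : f ≫ X.str = P.str) (hg : g ≫ X.str = Q.str) :
    ∃ (R : Variety k) (a : R.toScheme ⟶ P.toScheme) (b : R.toScheme ⟶ Q.toScheme),
      IsImmersion a ∧ IsImmersion b ∧ a ≫ P.str = R.str ∧ b ≫ Q.str = R.str ∧
      Set.range a.base = f.base ⁻¹' Set.range g.base ∧
      Set.range b.base = g.base ⁻¹' Set.range f.base := by
  obtain ⟨R, i, hi, h1, h2⟩ := exists_closed (pullback.fst f g ≫ P.str) Set.univ isClosed_univ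
  refine ⟨R, i ≫ pullback.fst f g, i ≫ pullback.snd f g, inferInstance, inferInstance,
    by simpa using h1, ?_, ?_, ?_⟩
  · rw [← h1, ← hf, ← hg, pullback.condition_assoc, Category.assoc]
  · simp only [Scheme.Hom.comp_base, TopCat.coe_comp, Set.range_comp, h2, Set.image_univ]
    exact Scheme.Pullback.range_fst f g
  · simp only [Scheme.Hom.comp_base, TopCat.coe_comp, Set.range_comp, h2, Set.image_univ]
    exact Scheme.Pullback.range_snd f g

end Geometry

end Variety


namespace Variety

lemma comb {T A ι : Type*} [AddCommGroup A] [Fintype ι] (μ : Set T → A) (good cl : Set T → Prop)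
    (h0 : μ ∅ = 0)
    (hcut : ∀ S C, good S → cl C → good (S ∩ C) ∧ good (S \ C) ∧ μ S = μ (S ∩ C) + μ (S \ C))
    (Z C : ι → Set T) (hZ : ∀ i, cl (Z i)) (hC : ∀ i, cl (C i))
    (hD : ∀ i j, i ≠ j → Disjoint (Z i \ C i) (Z j \ C j)) (L : List (Set T)) :
    ∀ S : Set T, good S → S ⊆ ⋃ i, Z i \ C i → (∀ c ∈ L, cl c) →
      (∀ i, Z i ∈ L ∨ S ⊆ Z i ∨ Disjoint S (Z i)) →
      (∀ i, C i ∈ L ∨ S ⊆ C i ∨ Disjoint S (C i)) →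
      μ S = ∑ i, μ (S ∩ (Z i \ C i)) := by
  classical
  induction L with
  | nil =>
    intro S hS hU _ h1 h2
    rcases S.eq_empty_or_nonempty with rfl | ⟨x, hx⟩
    · simp [h0]
    obtain ⟨i, hi⟩ := Set.mem_iUnion.mp (hU hx)
    have hsub : S ⊆ Z i \ C i := by
      intro y hy
      refine ⟨?_, fun hyC => ?_⟩
      · rcases h1 i with h | h | h
        · simp at h
        · exact h hy
        · exact (Set.disjoint_left.mp h hx hi.1).elim
      · rcases h2 i with h | h | h
        · simp at h
        · exact hi.2 (h hx)
        · exact Set.disjoint_left.mp h hy hyC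
    rw [Finset.sum_eq_single i]
    · rw [Set.inter_eq_left.mpr hsub]
    · intro j _ hj
      have : S ∩ (Z j \ C j) = ∅ :=
        Set.disjoint_iff_inter_eq_empty.mp ((hD i j hj.symm).mono_left hsub)
      rw [this, h0]
    · simp
  | cons c L ih =>
    intro S hS hU hL h1 h2
    have hc : cl c := hL c (by simp)
    obtain ⟨ga, gb, e⟩ := hcut S c hS hc
    have aux : ∀ (W : Set T), (W ∈ c :: L ∨ S ⊆ W ∨ Disjoint S W) →
        (W ∈ L ∨ S ∩ c ⊆ W ∨ Disjoint (S ∩ c) W) ∧ (W ∈ L ∨ S \ c ⊆ W ∨ Disjoint (S \ c) W) := by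
      intro W hW
      rcases hW with h | h | h
      · rcases List.mem_cons.mp h with rfl | h
        · exact ⟨.inr (.inl Set.inter_subset_right), .inr (.inr Set.disjoint_sdiff_left)⟩
        · exact ⟨.inl h, .inl h⟩
      · exact ⟨.inr (.inl (Set.inter_subset_left.trans h)), .inr (.inl (Set.sdiff_subset.trans h))⟩
      · exact ⟨.inr (.inr (h.mono_left Set.inter_subset_left)),
          .inr (.inr (h.mono_left Set.sdiff_subset))⟩
    have hL' : ∀ c ∈ L, cl c := fun d hd => hL d (by simp [hd])
    rw [e, ih _ ga (Set.inter_subset_left.trans hU) hL' (fun i => (aux _ (h1 i)).1)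
        (fun i => (aux _ (h2 i)).1),
      ih _ gb (Set.sdiff_subset.trans hU) hL' (fun i => (aux _ (h1 i)).2)
        (fun i => (aux _ (h2 i)).2), ← Finset.sum_add_distrib]
    refine Finset.sum_congr rfl fun i _ => ?_
    have hg : good (S ∩ (Z i \ C i)) := by
      have := (hcut _ _ (hcut S _ hS (hZ i)).1 (hC i)).2.1
      rwa [Set.inter_sdiff_assoc] at this
    rw [(hcut _ c hg hc).2.2]
    congr 2 <;> (ext x; simp only [Set.mem_inter_iff, Set.mem_sdiff]; tauto)

section Decomp

variable {k : Type u} [Field k]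

/-- A finite decomposition of `X` into locally closed subvarieties. -/
structure IsDecomp {ι : Type} (X : Variety k) (P : ι → Variety k)
    (f : ∀ i, (P i).toScheme ⟶ X.toScheme) : Prop where
  imm : ∀ i, IsImmersion (f i)
  overk : ∀ i, f i ≫ X.str = (P i).str
  disj : ∀ i j, i ≠ j → Disjoint (Set.range (f i).base) (Set.range (f j).base)
  union : (⋃ i, Set.range (f i).base) = Set.univ

lemma K0Var.cls_iso {X Y : Variety k} (e : X.toScheme ≅ Y.toScheme) (he : e.hom ≫ Y.str = X.str) :
    K0Var.cls X = K0Var.cls Y := by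
  refine (QuotientAddGroup.eq_iff_sub_mem).mpr (AddSubgroup.subset_closure ?_)
  exact Or.inl ⟨⟨X, trivial⟩, ⟨Y, trivial⟩, ⟨e, he⟩, rfl⟩

lemma K0Var.cls_cut {X Y U : Variety k} (i : Y.toScheme ⟶ X.toScheme)
    (j : U.toScheme ⟶ X.toScheme) (hi : IsClosedImmersion i) (hj : IsOpenImmersion j)
    (hi' : i ≫ X.str = Y.str) (hj' : j ≫ X.str = U.str)
    (h : Set.range j.base = (Set.range i.base)ᶜ) :
    K0Var.cls X = K0Var.cls Y + K0Var.cls U := by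
  refine (QuotientAddGroup.eq_iff_sub_mem).mpr (AddSubgroup.subset_closure ?_)
  refine Or.inr ⟨⟨X, trivial⟩, ⟨Y, trivial⟩, ⟨U, trivial⟩, i, j, hi, hj, hi', hj', h, ?_⟩
  exact (sub_sub _ _ _).symm

/-- `S` is the image of an immersion of a variety. -/
def Good (X : Variety k) (S : Set X.toScheme) : Prop :=
  ∃ (P : Variety k) (f : P.toScheme ⟶ X.toScheme), IsImmersion f ∧ f ≫ X.str = P.str ∧
    Set.range f.base = S

open Classical in
/-- The class of a locally closed subset. -/
def setCls (X : Variety k) (S : Set X.toScheme) : K0Var k :=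
  if h : Good X S then K0Var.cls h.choose else 0

lemma setCls_range {X P : Variety k} (f : P.toScheme ⟶ X.toScheme) [hf : IsImmersion f]
    (h : f ≫ X.str = P.str) : setCls X (Set.range f.base) = K0Var.cls P := by
  have hg : Good X (Set.range f.base) := ⟨P, f, hf, h, rfl⟩
  rw [setCls, dif_pos hg]
  obtain ⟨g, h1, h2, h3⟩ := hg.choose_spec
  obtain ⟨e, he⟩ := exists_iso g f h2 h h3
  exact K0Var.cls_iso e he

lemma setCls_cut (X : Variety k) (S C : Set X.toScheme) (hS : Good X S) (hC : IsClosed C) :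
    Good X (S ∩ C) ∧ Good X (S \ C) ∧ setCls X S = setCls X (S ∩ C) + setCls X (S \ C) := by
  obtain ⟨P, f, hf, ho, rfl⟩ := hS
  have hcl : IsClosed (f.base ⁻¹' C) := hC.preimage f.continuous
  obtain ⟨Y, i, hi, hi', hir⟩ := exists_closed P.str (f.base ⁻¹' C) hcl
  obtain ⟨U, j, hj, hj', hjr⟩ := exists_open P ⟨(f.base ⁻¹' C)ᶜ, hcl.isOpen_compl⟩
  have e1 : Set.range (i ≫ f).base = Set.range f.base ∩ C := by
    rw [Scheme.Hom.comp_base, TopCat.coe_comp, Set.range_comp, hir,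
      Set.image_preimage_eq_range_inter]
  have e2 : Set.range (j ≫ f).base = Set.range f.base \ C := by
    rw [Scheme.Hom.comp_base, TopCat.coe_comp, Set.range_comp, hjr]
    change _ '' (_ ⁻¹' Cᶜ) = _
    rw [Set.image_preimage_eq_range_inter, Set.sdiff_eq]
  have o1 : (i ≫ f) ≫ X.str = Y.str := by rw [Category.assoc, ho, hi']
  have o2 : (j ≫ f) ≫ X.str = U.str := by rw [Category.assoc, ho, hj']
  refine ⟨⟨Y, i ≫ f, inferInstance, o1, e1⟩, ⟨U, j ≫ f, inferInstance, o2, e2⟩, ?_⟩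
  rw [← e1, ← e2, setCls_range f ho, setCls_range _ o1, setCls_range _ o2]
  exact K0Var.cls_cut i j hi hj hi' hj' (by rw [hir, hjr]; rfl)

lemma setCls_empty (X : Variety k) : setCls X ∅ = 0 := by
  by_cases h : Good X ∅
  · have := (setCls_cut X ∅ ∅ h isClosed_empty).2.2
    simpa using this
  · rw [setCls, dif_neg h]

lemma IsDecomp.cls_eq {ι : Type} [Fintype ι] {X : Variety k} {P : ι → Variety k}
    {f : ∀ i, (P i).toScheme ⟶ X.toScheme} (h : IsDecomp X P f) :
    K0Var.cls X = ∑ i, K0Var.cls (P i) := by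
  have hl (i) : ∃ Z C : Set X.toScheme, IsClosed Z ∧ IsClosed C ∧
      Set.range (f i).base = Z \ C := by
    have := h.imm i
    obtain ⟨U, Z, hU, hZ, e⟩ := (f i).isLocallyClosed_range
    refine ⟨Z, Uᶜ, hZ, hU.isClosed_compl, ?_⟩
    refine Eq.trans e ?_
    rw [Set.sdiff_eq, compl_compl, Set.inter_comm]
  choose Z C hZ hC e using hl
  have key := comb (setCls X) (Good X) IsClosed (setCls_empty X) (setCls_cut X) Z C hZ hC
    (fun i j hij => by rw [← e, ← e]; exact h.disj i j hij)
    (Finset.univ.toList.map Z ++ Finset.univ.toList.map C) Set.univ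
    ⟨X, 𝟙 _, inferInstance, by simp, by simp⟩
    (by simp_rw [← e]; rw [h.union])
    (by
      intro c hc
      simp only [List.mem_append, List.mem_map, Finset.mem_toList, Finset.mem_univ,
        true_and] at hc
      rcases hc with ⟨i, rfl⟩ | ⟨i, rfl⟩
      · exact hZ i
      · exact hC i)
    (fun i => Or.inl (by simp)) (fun i => Or.inl (by simp))
  have e0 : setCls X Set.univ = K0Var.cls X := by
    rw [← setCls_range (𝟙 X.toScheme) (by simp)]
    simp
  rw [e0] at key
  rw [key]
  refine Finset.sum_congr rfl fun i _ => ?_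
  have := h.imm i
  rw [Set.univ_inter, ← e, setCls_range (f i) (h.overk i)]

lemma IsDecomp.sigma {ι : Type} {κ : ι → Type} {X : Variety k} {P : ι → Variety k}
    {f : ∀ i, (P i).toScheme ⟶ X.toScheme} (h : IsDecomp X P f) {Q : ∀ i, κ i → Variety k}
    {g : ∀ i j, (Q i j).toScheme ⟶ (P i).toScheme} (hg : ∀ i, IsDecomp (P i) (Q i) (g i)) :
    IsDecomp X (fun x : Sigma κ => Q x.1 x.2) (fun x => g x.1 x.2 ≫ f x.1) where
  imm x := by
    have := h.imm x.1
    have := (hg x.1).imm x.2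
    infer_instance
  overk x := by rw [Category.assoc, h.overk, (hg x.1).overk]
  disj := by
    rintro ⟨i, a⟩ ⟨j, b⟩ hne
    simp only [Scheme.Hom.comp_base, TopCat.coe_comp, Set.range_comp]
    by_cases hij : i = j
    · subst hij
      have hab : a ≠ b := fun h => hne (by rw [h])
      have := h.imm i
      exact (Set.disjoint_image_iff (f i).isEmbedding.injective).mpr ((hg i).disj a b hab)
    · exact (h.disj i j hij).mono (Set.image_subset_range _ _) (Set.image_subset_range _ _)
  union := by
    rw [Set.eq_univ_iff_forall]
    intro x
    have hx : x ∈ ⋃ i, Set.range (f i).base := by rw [h.union]; trivial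
    obtain ⟨i, y, rfl⟩ := Set.mem_iUnion.mp hx
    have hy : y ∈ ⋃ j, Set.range (g i j).base := by rw [(hg i).union]; trivial
    obtain ⟨j, z, rfl⟩ := Set.mem_iUnion.mp hy
    exact Set.mem_iUnion.mpr ⟨⟨i, j⟩, z, by simp⟩

lemma IsDecomp.pull {ι : Type} {X P : Variety k} {Q R : ι → Variety k}
    {g : ∀ i, (Q i).toScheme ⟶ X.toScheme} (h : IsDecomp X Q g) (f : P.toScheme ⟶ X.toScheme)
    (a : ∀ i, (R i).toScheme ⟶ P.toScheme) (ha : ∀ i, IsImmersion (a i))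
    (ho : ∀ i, a i ≫ P.str = (R i).str)
    (hr : ∀ i, Set.range (a i).base = f.base ⁻¹' Set.range (g i).base) : IsDecomp P R a where
  imm := ha
  overk := ho
  disj i j hij := by rw [hr, hr]; exact (h.disj i j hij).preimage _
  union := by simp_rw [hr, ← Set.preimage_iUnion, h.union, Set.preimage_univ]

lemma IsDecomp.unit {X Y : Variety k} (e : X.toScheme ≅ Y.toScheme)
    (he : e.hom ≫ Y.str = X.str) : IsDecomp Y (fun _ : Unit => X) (fun _ => e.hom) where
  imm _ := inferInstance
  overk _ := he
  disj i j hij := (hij rfl).elim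
  union := by
    rw [Set.iUnion_const]
    exact Set.range_eq_univ.mpr e.hom.surjective

lemma IsDecomp.cut {X Y U : Variety k} (i : Y.toScheme ⟶ X.toScheme)
    (j : U.toScheme ⟶ X.toScheme) (hi : IsClosedImmersion i) (hj : IsOpenImmersion j)
    (hi' : i ≫ X.str = Y.str) (hj' : j ≫ X.str = U.str)
    (h : Set.range j.base = (Set.range i.base)ᶜ) :
    IsDecomp X (fun b : Bool => Bool.rec U Y b)
      (fun b => Bool.rec (motive := fun b => ((Bool.rec U Y b : Variety k)).toScheme ⟶ X.toScheme)
        j i b) where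
  imm b := by cases b <;> dsimp only <;> infer_instance
  overk b := by cases b <;> assumption
  disj a b hab := by
    cases a <;> cases b <;> simp only [ne_eq, not_true_eq_false, reduceCtorEq] at hab ⊢
    · rw [h]; exact disjoint_compl_left
    · rw [h]; exact disjoint_compl_right
  union := by
    rw [Set.eq_univ_iff_forall]
    intro x
    by_cases hx : x ∈ Set.range i.base
    · exact Set.mem_iUnion.mpr ⟨true, hx⟩
    · exact Set.mem_iUnion.mpr ⟨false, by rw [← Set.mem_compl_iff, ← h] at hx; exact hx⟩

lemma IsDecomp.sm_eq {ι : Type} [Fintype ι] {X : Variety k} {P : ι → Variety k}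
    {f : ∀ i, (P i).toScheme ⟶ X.toScheme} (h : IsDecomp X P f) (hX : IsSmoothVar X)
    (hP : ∀ i, IsSmoothVar (P i)) :
    K0sm.cls X hX = ∑ i, K0sm.cls (P i) (hP i) := by
  let e := (Fintype.equivFin ι).symm
  have : (∑ i, K0sm.cls (P i) (hP i)) =
      QuotientAddGroup.mk' (AddSubgroup.closure (smCutRel k))
        (∑ i, FreeAbelianGroup.of ⟨P (e i), hP (e i)⟩) := by
    rw [map_sum, ← Equiv.sum_comp e]
    rfl
  rw [this]
  refine (QuotientAddGroup.eq_iff_sub_mem).mpr (AddSubgroup.subset_closure ?_)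
  refine ⟨⟨X, hX⟩, _, fun i => ⟨P (e i), hP (e i)⟩, fun i => f (e i), fun i => h.imm _,
    fun i => h.overk _, fun i j hij => h.disj _ _ (e.injective.ne hij), ?_, rfl⟩
  rw [← h.union]
  exact e.surjective.iUnion_comp (fun i => Set.range (f i).base)

/-- `a` is the value of some decomposition of `X` into smooth pieces. -/
def SmVal (X : Variety k) (a : K0sm k) : Prop :=
  ∃ (ι : Type) (_ : Fintype ι) (P : ι → Variety k) (f : ∀ i, (P i).toScheme ⟶ X.toScheme)
    (hP : ∀ i, IsSmoothVar (P i)), IsDecomp X P f ∧ a = ∑ i, K0sm.cls (P i) (hP i)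

lemma SmVal.sigma {ι : Type} [Fintype ι] {X : Variety k} {P : ι → Variety k}
    {f : ∀ i, (P i).toScheme ⟶ X.toScheme} (h : IsDecomp X P f) {a : ι → K0sm k}
    (ha : ∀ i, SmVal (P i) (a i)) : SmVal X (∑ i, a i) := by
  choose κ _ Q g hQ hg e using ha
  refine ⟨Sigma κ, inferInstance, _, _, fun x => hQ x.1 x.2, h.sigma hg, ?_⟩
  rw [Fintype.sum_sigma]
  exact Finset.sum_congr rfl fun i _ => e i

lemma SmVal.of_smooth {X : Variety k} (hX : IsSmoothVar X) : SmVal X (K0sm.cls X hX) :=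
  ⟨Unit, inferInstance, _, _, fun _ => hX, IsDecomp.unit (Iso.refl _) (by simp), by simp⟩

lemma SmVal.eq_of_smooth {X : Variety k} (hX : IsSmoothVar X) {a} (h : SmVal X a) :
    a = K0sm.cls X hX := by
  obtain ⟨ι, _, P, f, hP, hd, rfl⟩ := h
  exact (hd.sm_eq hX hP).symm

lemma SmVal.cut {X Y U : Variety k} (i : Y.toScheme ⟶ X.toScheme)
    (j : U.toScheme ⟶ X.toScheme) (hi : IsClosedImmersion i) (hj : IsOpenImmersion j)
    (hi' : i ≫ X.str = Y.str) (hj' : j ≫ X.str = U.str)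
    (h : Set.range j.base = (Set.range i.base)ᶜ) {a b : K0sm k} (ha : SmVal Y a)
    (hb : SmVal U b) : SmVal X (a + b) := by
  have := SmVal.sigma (a := fun x : Bool => Bool.rec b a x) (IsDecomp.cut i j hi hj hi' hj' h)
    (by intro x; cases x <;> assumption)
  simpa using this

lemma SmVal.iso {X Y : Variety k} (e : X.toScheme ≅ Y.toScheme)
    (he : e.hom ≫ Y.str = X.str) {a : K0sm k} (ha : SmVal X a) : SmVal Y a := by
  simpa using SmVal.sigma (a := fun _ => a) (IsDecomp.unit e he) (fun _ => ha)

lemma SmVal.exists_aux [PerfectField k] (X : Variety k) (C : TopologicalSpace.Closeds X.toScheme) :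
    ∀ (Y : Variety k) (i : Y.toScheme ⟶ X.toScheme), IsClosedImmersion i → i ≫ X.str = Y.str →
      Set.range i.base = C → ∃ a, SmVal Y a := by
  induction C using WellFoundedLT.induction with
  | ind C ih =>
    intro Y i hi ho hr
    cases isEmpty_or_nonempty Y.toScheme with
    | inl hY =>
      exact ⟨0, Empty, inferInstance, fun x => x.elim, fun x => x.elim, fun x => x.elim,
        ⟨fun x => x.elim, fun x => x.elim, fun x => x.elim,
          Set.eq_univ_iff_forall.mpr fun x => (hY.false x).elim⟩, by simp⟩
    | inr hY =>
      obtain ⟨U, j, hU, hj, hj', ⟨y, hy⟩⟩ := exists_smooth_open Y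
      have hop : IsOpen (Set.range j.base) := j.isOpenEmbedding.isOpen_range
      obtain ⟨Z, z, hz, hz', hzr⟩ := exists_closed Y.str (Set.range j.base)ᶜ hop.isClosed_compl
      have hcl : IsClosed (Set.range (z ≫ i).base) := (z ≫ i).isClosedEmbedding.isClosed_range
      obtain ⟨a, ha⟩ := ih ⟨_, hcl⟩ (by
        rw [← SetLike.coe_ssubset_coe, ← hr]
        refine ⟨?_, fun hh => ?_⟩
        · simp only [TopologicalSpace.Closeds.coe_mk, Scheme.Hom.comp_base, TopCat.coe_comp]
          exact Set.range_comp_subset_range _ _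
        · obtain ⟨w, hw⟩ := hh ⟨y, rfl⟩
          have : z.base w = y := i.isEmbedding.injective (by simpa using hw)
          have h2 : z.base w ∈ (Set.range j.base)ᶜ := by rw [← hzr]; exact ⟨w, rfl⟩
          exact h2 (this ▸ hy)) Z (z ≫ i) inferInstance (by rw [Category.assoc, ho, hz']) rfl
      exact ⟨_, SmVal.cut z j hz hj hz' hj' (by rw [hzr, compl_compl]) ha (SmVal.of_smooth hU)⟩

lemma SmVal.exists' [PerfectField k] (X : Variety k) : ∃ a, SmVal X a :=
  SmVal.exists_aux X ⊤ X (𝟙 _) inferInstance (by simp) (by simp)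

lemma SmVal.unique [PerfectField k] {X : Variety k} {a b : K0sm k} (ha : SmVal X a)
    (hb : SmVal X b) : a = b := by
  obtain ⟨ι, _, P, f, hP, hf, rfl⟩ := ha
  obtain ⟨κ, _, Q, g, hQ, hg, rfl⟩ := hb
  have (i : ι) (j : κ) := by
    have := hf.imm i
    have := hg.imm j
    exact exists_inter (f i) (g j) (hf.overk i) (hg.overk j)
  choose R p q hp hq hp' hq' hpr hqr using this
  choose v hv using fun i j => SmVal.exists' (R i j)
  have e1 (i : ι) : K0sm.cls (P i) (hP i) = ∑ j, v i j :=
    (SmVal.eq_of_smooth (hP i) (SmVal.sigma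
      (hg.pull (f i) (p i) (hp i) (hp' i) (hpr i)) (hv i))).symm
  have e2 (j : κ) : K0sm.cls (Q j) (hQ j) = ∑ i, v i j :=
    (SmVal.eq_of_smooth (hQ j) (SmVal.sigma
      (hf.pull (g j) (fun i => q i j) (fun i => hq i j) (fun i => hq' i j) (fun i => hqr i j))
        (fun i => hv i j))).symm
  simp_rw [e1, e2]
  exact Finset.sum_comm

/-- The natural map. -/
def smToVar (k : Type u) [Field k] : K0sm k →+ K0Var k :=
  QuotientAddGroup.lift _ (FreeAbelianGroup.lift fun V => K0Var.cls V.1) <| by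
    rw [AddSubgroup.closure_le]
    rintro _ ⟨X, m, P, f, h1, h2, h3, h4, rfl⟩
    have h : IsDecomp X.1 (fun i => (P i).1) f := ⟨h1, h2, h3, h4⟩
    simp only [SetLike.mem_coe, AddMonoidHom.mem_ker, map_sub, map_sum,
      FreeAbelianGroup.lift_apply_of]
    rw [h.cls_eq, sub_self]

lemma smToVar_cls (V : Variety k) (hV : IsSmoothVar V) :
    smToVar k (K0sm.cls V hV) = K0Var.cls V :=
  FreeAbelianGroup.lift_apply_of _ _

lemma SmVal.map {X : Variety k} {a : K0sm k} (h : SmVal X a) : smToVar k a = K0Var.cls X := by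
  obtain ⟨ι, _, P, f, hP, hf, rfl⟩ := h
  simp only [map_sum, smToVar_cls]
  exact hf.cls_eq.symm

/-- The inverse map. -/
def varToSm (k : Type u) [Field k] [PerfectField k] : K0Var k →+ K0sm k :=
  QuotientAddGroup.lift _ (FreeAbelianGroup.lift fun V => (SmVal.exists' V.1).choose) <| by
    rw [AddSubgroup.closure_le]
    rintro _ (⟨X, Y, ⟨e, he⟩, rfl⟩ | ⟨X, Y, U, i, j, h1, h2, h3, h4, h5, rfl⟩)
    · simp only [SetLike.mem_coe, AddMonoidHom.mem_ker, map_sub,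
        FreeAbelianGroup.lift_apply_of]
      rw [sub_eq_zero]
      exact SmVal.unique ((SmVal.exists' X.1).choose_spec.iso e he) (SmVal.exists' Y.1).choose_spec
    · simp only [SetLike.mem_coe, AddMonoidHom.mem_ker, map_sub,
        FreeAbelianGroup.lift_apply_of]
      rw [sub_sub, sub_eq_zero]
      exact SmVal.unique (SmVal.exists' X.1).choose_spec
        (SmVal.cut i j h1 h2 h3 h4 h5 (SmVal.exists' Y.1).choose_spec
          (SmVal.exists' U.1).choose_spec)

lemma SmVal.varToSm_cls [PerfectField k] {V : Variety k} {a : K0sm k} (h : SmVal V a) :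
    varToSm k (K0Var.cls V) = a :=
  (FreeAbelianGroup.lift_apply_of _ _).trans (SmVal.unique (SmVal.exists' V).choose_spec h)

end Decomp

end Variety

/-- Over a perfect field, the natural homomorphism
`K_0(V_k^{sm}) → K_0[V_k]` is an isomorphism of abelian groups. -/
theorem K0sm_iso_K0Var (k : Type u) [Field k] [PerfectField k] :
    ∃ f : K0sm k →+ K0Var k,
      (∀ (V : Variety k) (hV : IsSmoothVar V), f (K0sm.cls V hV) = K0Var.cls V) ∧
      Function.Bijective f := by
  refine ⟨smToVar k, smToVar_cls, ?_, ?_⟩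
  · have hl : (varToSm k).comp (smToVar k) = AddMonoidHom.id _ := by
      apply QuotientAddGroup.addMonoidHom_ext
      apply FreeAbelianGroup.lift_ext
      rintro ⟨V, hV⟩
      change varToSm k (smToVar k (K0sm.cls V hV)) = K0sm.cls V hV
      rw [smToVar_cls]
      exact (SmVal.of_smooth hV).varToSm_cls
    exact Function.LeftInverse.injective fun x => DFunLike.congr_fun hl x
  · have hr : (smToVar k).comp (varToSm k) = AddMonoidHom.id _ := by
      apply QuotientAddGroup.addMonoidHom_ext
      apply FreeAbelianGroup.lift_ext
      rintro ⟨V, hV⟩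
      change smToVar k (varToSm k (K0Var.cls V)) = K0Var.cls V
      obtain ⟨a, ha⟩ := SmVal.exists' V
      rw [ha.varToSm_cls, ha.map]
    exact Function.RightInverse.surjective fun x => DFunLike.congr_fun hr x
end
end
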